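/- Suppose R ∈ ℤ_{>0}^m, C ∈ ℤ_{≥0}^n, K ∈ ℤ_{>0}^{m×n}, T_K(R,C) > 0, and the vector C̃ defined by c̃_j := (Σ_{i=1}^m k_{ij}) − c_j lies in ℤ_{>0}^n. Let G(x,y) := ∏_{i=1}^m ∏_{j=1}^n [1 + x_i y_j + ⋯ + (x_i y_j)^{k_{ij}}], let 𝒩 := ∏_{i=1}^m (1 + Σ_{j=1}^n k_{ij}) + ∏_{j=1}^n (1 + Σ_{i=1}^m k_{ij}), and let ♥ := −ln√(2π|K|) + Σ_{i=1}^m ln√(2π r_i) + Σ_{j=1}^n ln√(2π c̃_j) + (m+n)·ln(e/√(2π)). Then ln ( inf_{x_i,y_j>0} G(x,y)/(x^R y^C) ) ≥ ln T_K(R,C) ≥ ln ( inf_{x_i,y_j>0} G(x,y)/(x^R y^C) ) − ln 𝒩 − ♥, where x^R y^C := ∏_i x_i^{r_i} ∏_j y_j^{c_j}. -/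

import Mathlib

open Real Filter Finset

noncomputable section

/-- `ω(n) = n^n / n!`. -/
def omegaFn (n : ℕ) : ℝ := (n : ℝ) ^ n / (n.factorial : ℝ)

/-- `Ω(V)`: the sum of `ω(v)` over the entries of a vector `V`. -/
def OmegaVec {I : Type*} [Fintype I] (V : I → ℕ) : ℝ := ∑ i, omegaFn (V i)

/-- `Ω(K)`: the sum of `ω(k)` over the entries of a matrix `K`. -/
def OmegaMat {I J : Type*} [Fintype I] [Fintype J] (K : I → J → ℕ) : ℝ :=
  ∑ i, ∑ j, omegaFn (K i j)

/-- `T_K(R,C)`: the number of nonnegative-integer matrices with row sums `R`,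
column sums `C`, and entries bounded by `K` (a bound of `⊤` means unbounded). -/
def tableCount {I J : Type*} [Fintype I] [Fintype J]
    (K : I → J → ℕ∞) (R : I → ℕ) (C : J → ℕ) : ℕ :=
  Set.ncard {A : I → J → ℕ |
    (∀ i, ∑ j, A i j = R i) ∧ (∀ j, ∑ i, A i j = C j) ∧ ∀ i j, (A i j : ℕ∞) ≤ K i j}

/-- The `s`-fold cloning of a margin vector. -/
def cloneVec {m : ℕ} (s : ℕ) (R : Fin m → ℕ) : Fin s × Fin m → ℕ :=
  fun p => s * R p.2

/-- The `s`-fold cloning of a bound matrix. -/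
def cloneMat {m n : ℕ} (s : ℕ) (K : Fin m → Fin n → ℕ∞) :
    Fin s × Fin m → Fin s × Fin n → ℕ∞ :=
  fun p q => K p.2 q.2

/-- The mean of the truncated geometric distribution on `{0,…,κ}` with ratio `q`. -/
def tgMean (κ : ℕ∞) (q : ℝ) : ℝ :=
  if κ = ⊤ then q / (1 - q)
  else (∑ t ∈ Finset.range (κ.toNat + 1), (t : ℝ) * q ^ t) /
    (∑ t ∈ Finset.range (κ.toNat + 1), q ^ t)

/-- The parameter `q(x;κ)` of the truncated geometric distribution `TG(x;κ)` with mean `x`. -/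
def tgQ (κ : ℕ∞) (x : ℝ) : ℝ := sInf {q : ℝ | 0 ≤ q ∧ x ≤ tgMean κ q}

/-- The parameter `p(x;κ)` of the truncated geometric distribution `TG(x;κ)` with mean `x`. -/
def tgP (κ : ℕ∞) (x : ℝ) : ℝ :=
  if κ = ⊤ then 1 - tgQ κ x
  else (∑ t ∈ Finset.range (κ.toNat + 1), tgQ κ x ^ t)⁻¹

/-- The probability mass function of `TG(x;κ)`: `Pr[X=t] = p q^t` for `t ∈ {0,…,κ}`. -/
def tgPMF (κ : ℕ∞) (x : ℝ) (t : ℕ) : ℝ :=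
  if (t : ℕ∞) ≤ κ then tgP κ x * tgQ κ x ^ t else 0

/-- `H^max_κ(x)`: the (base-e) entropy of the truncated geometric distribution `TG(x;κ)`. -/
def Hmax (κ : ℕ∞) (x : ℝ) : ℝ := -∑' t : ℕ, tgPMF κ x t * Real.log (tgPMF κ x t)

/-- The `(κ+1)`-nomial coefficient `(n choose r)_κ`: the coefficient of `x^r` in
`(1+x+⋯+x^κ)^n`; for `κ = ∞` it is `(r+n-1).choose r`. -/
def knomial (κ : ℕ∞) (n r : ℕ) : ℕ :=
  if κ = ⊤ then (r + n - 1).choose r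
  else ((∑ t ∈ Finset.range (κ.toNat + 1), (Polynomial.X : Polynomial ℕ) ^ t) ^ n).coeff r

/-- The independence-heuristic estimate `I_κ(R,C)`. -/
def indepEst (κ : ℕ∞) {I J : Type*} [Fintype I] [Fintype J] (R : I → ℕ) (C : J → ℕ) : ℝ :=
  ((knomial κ (Fintype.card I * Fintype.card J) (∑ i, R i) : ℝ))⁻¹ *
    (∏ i, (knomial κ (Fintype.card J) (R i) : ℝ)) *
    ∏ j, (knomial κ (Fintype.card I) (C j) : ℝ)

/-- The transportation polytope `Π_κ(R,C)` of real matrices with entries in `[0,κ]`,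
row sums `R` and column sums `C`. -/
def transportPolytope (κ : ℕ∞) {m n : ℕ} (R : Fin m → ℕ) (C : Fin n → ℕ) :
    Set (Fin m → Fin n → ℝ) :=
  {Z | (∀ i j, 0 ≤ Z i j) ∧ (∀ i j, κ ≠ ⊤ → Z i j ≤ (κ.toNat : ℝ)) ∧
    (∀ i, ∑ j, Z i j = (R i : ℝ)) ∧ ∀ j, ∑ i, Z i j = (C j : ℝ)}

/-- The generating function `G(x,y) = ∏_{i,j} (1 + x_i y_j + ⋯ + (x_i y_j)^{k_{ij}})`. -/
def genFun {m n : ℕ} (K : Fin m → Fin n → ℕ) (x : Fin m → ℝ) (y : Fin n → ℝ) : ℝ :=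
  ∏ i, ∏ j, ∑ t ∈ Finset.range (K i j + 1), (x i * y j) ^ t

/-- The monomial `x^R = ∏_i x_i^{r_i}`. -/
def monom {m : ℕ} (x : Fin m → ℝ) (R : Fin m → ℕ) : ℝ := ∏ i, x i ^ R i

/-- The concave roof function `f_K(R,C)`: the supremum of `∑_t α_t ln T_K(R^t,C^t)` over
convex combinations of integer margins averaging to `(R,C)` (and `⊥ = -∞` if none exist). -/
def fK {m n : ℕ} (K : Fin m → Fin n → ℕ) (R : Fin m → ℝ) (C : Fin n → ℝ) : EReal :=
  sSup {v : EReal | ∃ (p : ℕ) (α : Fin p → ℝ)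
    (Rs : Fin p → Fin m → ℕ) (Cs : Fin p → Fin n → ℕ),
    1 ≤ p ∧ (∀ t, 0 ≤ α t) ∧ ∑ t, α t = 1 ∧
    (∀ i, ∑ t, α t * (Rs t i : ℝ) = R i) ∧ (∀ j, ∑ t, α t * (Cs t j : ℝ) = C j) ∧
    (∀ t, 0 < tableCount (fun i j => (K i j : ℕ∞)) (Rs t) (Cs t)) ∧
    v = ((∑ t, α t * Real.log (tableCount (fun i j => (K i j : ℕ∞)) (Rs t) (Cs t)) : ℝ) : EReal)}

/-- `e^x` for an extended real `x`, with `e^{-∞} = 0`. -/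
def expE (e : EReal) : ℝ := if e = ⊥ then 0 else Real.exp e.toReal

end

/-! Replacing `y_j` by `1 / y_j` and clearing denominators makes `G` a polynomial in which
`T_K(R, C)` is the coefficient whose exponent is `r_i` at row `i` and `∑ i, k_ij - c_j` at column
`j`. This coefficient is extracted one variable at a time. At each stage the coefficients in the
current variable form a log-concave sequence: the constraints that an entry and its complement add
up to `k_ij` are relaxed to Gaussian penalties `exp (-s (a + b - k_ij)²)`, which give a Lorentzian
series, the Lorentzian property survives the identification of variables, and log-concavity
survives the limit `s → ∞`. A log-concave sequence of length `d + 1` is dominated by a geometric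
one that touches it at the target exponent `r`, so an extraction costs at most a factor
`∑ q^c / q^r`, for any ratio `q`, and some `q` makes this at most `(2 / √5) e √r √(1 + d)`. AM-GM
bounds the product of all `√(1 + d)` by `𝒩 / 2`. The total load is fixed, so one line needs no
extraction; its unused factor and the constants `2 / √5` pay for `√(2π|K|)`. -/

noncomputable section

section BilinForm

variable {M : Type*} [AddCommGroup M] [Module ℝ M] {B : LinearMap.BilinForm ℝ M}

/-- `B` is nonpositive on the kernel of some linear functional; for symmetric `B` this is the
Lorentzian signature condition of having at most one positive eigenvalue. -/
def NonposOnHyperplane (B : LinearMap.BilinForm ℝ M) : Prop :=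
  ∃ l : M →ₗ[ℝ] ℝ, ∀ v, l v = 0 → B v v ≤ 0

lemma NonposOnHyperplane.mul_self_le_sq (hB : NonposOnHyperplane B) (hsymm : B.IsSymm) (v : M)
    {w : M} (hw : 0 ≤ B w w) : B v v * B w w ≤ B v w ^ 2 := by
  obtain ⟨l, hl⟩ := hB
  by_cases hlw : l w = 0
  · rw [le_antisymm (hl w hlw) hw, mul_zero]
    positivity
  have hvw : B w v = B v w := hsymm.eq w v
  have hz : B (l w • v - l v • w) (l w • v - l v • w) ≤ 0 := hl _ (by simp [mul_comm])
  simp only [map_sub, map_smul, LinearMap.sub_apply, LinearMap.smul_apply, smul_eq_mul, hvw] at hz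
  have hsq : l w ^ 2 * (B v v * B w w - B v w ^ 2) ≤ 0 := by
    nlinarith [mul_nonpos_of_nonneg_of_nonpos hw hz, sq_nonneg (l v * B w w - l w * B v w)]
  linarith [nonpos_of_mul_nonpos_right hsq (by positivity)]

lemma NonposOnHyperplane.self_le_sq_div_add_sq_div (hB : NonposOnHyperplane B) (hsymm : B.IsSymm)
    {e₀ e₁ : M} (h₀ : 0 < B e₀ e₀) (h₁ : 0 < B e₁ e₁) (h₀₁ : 0 ≤ B e₀ e₁) (u : M) :
    B u u ≤ B u e₀ ^ 2 / B e₀ e₀ + B u e₁ ^ 2 / B e₁ e₁ := by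
  set X := B u e₀ ^ 2 / B e₀ e₀ + B u e₁ ^ 2 / B e₁ e₁ with hX
  obtain hu | hu := le_or_gt (B u u) 0
  · exact hu.trans (by positivity)
  have hX_pos : 0 < X := by
    have hne : B u e₀ ≠ 0 := fun h => by
      have := hB.mul_self_le_sq hsymm u h₀.le
      rw [h] at this
      nlinarith
    positivity
  -- The test vector `w` is chosen so that `X ≤ B w w` and `|B u w| ≤ X`.
  set s := |B u e₀| / B e₀ e₀
  set t := |B u e₁| / B e₁ e₁
  have hs0 : 0 ≤ s := by positivity
  have ht0 : 0 ≤ t := by positivity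
  have hX' : X = s * |B u e₀| + t * |B u e₁| := by
    rw [hX, ← sq_abs (B u e₀), ← sq_abs (B u e₁)]
    ring
  have hXw : X ≤ B (s • e₀ + t • e₁) (s • e₀ + t • e₁) := by
    have hs1 : s * B e₀ e₀ = |B u e₀| := div_mul_cancel₀ _ h₀.ne'
    have ht1 : t * B e₁ e₁ = |B u e₁| := div_mul_cancel₀ _ h₁.ne'
    have h₁₀ : B e₁ e₀ = B e₀ e₁ := hsymm.eq e₁ e₀
    simp only [map_add, map_smul, LinearMap.add_apply, LinearMap.smul_apply, smul_eq_mul, h₁₀,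
      hs1, ht1, hX']
    nlinarith [mul_nonneg (mul_nonneg hs0 ht0) h₀₁]
  have huw : |B u (s • e₀ + t • e₁)| ≤ X := by
    simp only [map_add, map_smul, smul_eq_mul]
    refine (abs_add_le _ _).trans_eq ?_
    rw [abs_mul, abs_mul, abs_of_nonneg hs0, abs_of_nonneg ht0, hX']
  refine le_of_mul_le_mul_right ?_ hX_pos
  calc B u u * X ≤ B u u * B (s • e₀ + t • e₁) (s • e₀ + t • e₁) := by gcongr
    _ ≤ B u (s • e₀ + t • e₁) ^ 2 := hB.mul_self_le_sq hsymm u (hX_pos.le.trans hXw)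
    _ ≤ X ^ 2 := sq_le_sq.mpr (huw.trans (le_abs_self X))
    _ = X * X := sq X

-- The discriminant `B e e * B v v - B e v ^ 2` is unchanged when a multiple of `e` is added to `v`.
lemma nonposOnHyperplane_of_mul_self_le_sq (hsymm : B.IsSymm) {e : M} (he : 0 < B e e)
    (h : ∀ v, ∃ t : ℝ, B e e * B (v - t • e) (v - t • e) ≤ B e (v - t • e) ^ 2) :
    NonposOnHyperplane B := by
  refine ⟨B e, fun v hv => ?_⟩
  obtain ⟨t, ht⟩ := h v
  have hv' : B v e = 0 := (hsymm.eq v e).trans hv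
  simp only [map_sub, map_smul, LinearMap.sub_apply, LinearMap.smul_apply, smul_eq_mul, hv,
    hv'] at ht
  exact nonpos_of_mul_nonpos_right (a := B e e) (by nlinarith) he

end BilinForm

section DiscretePrekopa

lemma exists_chain_potential {n : ℕ} {p : ℕ → ℝ} (q : ℕ → ℝ) (hp : ∀ a ≤ n, 0 < p a) :
    ∃ (ξ : ℕ → ℝ) (τ : ℝ), ξ 0 = 0 ∧ ξ n = τ ∧
      τ * ∑ a ∈ range (n + 1), p a = -∑ a ∈ range n, q a ∧
      ∀ a < n, q a = (ξ a - τ) * p a - ξ (a + 1) * p (a + 1) := by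
  set A := ∑ a ∈ range (n + 1), p a with hA
  have hA_pos : 0 < A :=
    sum_pos (fun a ha => hp a (by simpa [Nat.lt_succ_iff] using ha)) nonempty_range_add_one
  obtain ⟨τ, hτ⟩ : ∃ τ : ℝ, τ * A = -∑ a ∈ range n, q a :=
    ⟨_, div_mul_cancel₀ _ hA_pos.ne'⟩
  set ξ : ℕ → ℝ := fun a => -(∑ b ∈ range a, (q b + τ * p b)) / p a with hξ
  have hξp : ∀ a ≤ n, ξ a * p a = -∑ b ∈ range a, (q b + τ * p b) := fun a ha =>
    div_mul_cancel₀ _ (hp a ha).ne'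
  refine ⟨ξ, τ, by simp [hξ], mul_right_cancel₀ (hp n le_rfl).ne' ?_, hτ, fun a ha => ?_⟩
  · rw [hξp n le_rfl, sum_add_distrib, ← mul_sum]
    rw [hA, sum_range_succ] at hτ
    linarith
  · have h := hξp (a + 1) ha
    rw [sum_range_succ] at h
    linarith [hξp a ha.le]

/-- Each `s a` is bounded by its local inequality evaluated along the potential `ξ`; the resulting
bounds telescope. -/
lemma sum_le_of_chain_potential {n : ℕ} {p q s ξ : ℕ → ℝ} {τ : ℝ} (hp : ∀ a ≤ n + 2, 0 < p a)
    (h : ∀ a ≤ n, ∀ x y : ℝ,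
      x * (x * p (a + 2) + y * p (a + 1) + q (a + 1)) + y * (x * p (a + 1) + y * p a + q a) +
        (x * q (a + 1) + y * q a + s a) ≤
      (x * p (a + 2) + y * p (a + 1) + q (a + 1)) ^ 2 / p (a + 2) +
        (x * p (a + 1) + y * p a + q a) ^ 2 / p a)
    (hξ₀ : ξ 0 = 0) (hξ : ξ (n + 2) = τ)
    (hq : ∀ a < n + 2, q a = (ξ a - τ) * p a - ξ (a + 1) * p (a + 1)) :
    ∑ a ∈ range (n + 1), s a ≤ -τ * ∑ a ∈ range (n + 2), q a := by
  set U : ℕ → ℝ := fun b => (ξ b - ξ (b + 1)) ^ 2 * p (b + 1) -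
    ξ b * (ξ b - ξ (b + 1)) * p (b + 1) - ξ b * q b with hU
  set W : ℕ → ℝ := fun b => (ξ b - ξ (b + 1)) ^ 2 * p b -
    (τ - ξ (b + 1)) * (ξ b - ξ (b + 1)) * p b - (τ - ξ (b + 1)) * q b with hW
  have hs : ∀ a ∈ range (n + 1), s a ≤ U (a + 1) + W a := fun a ha => by
    have ha' : a ≤ n := by simpa [Nat.lt_succ_iff] using ha
    have hloc := h a ha' (ξ (a + 1)) (τ - ξ (a + 1))
    have h₁ : ξ (a + 1) * p (a + 2) + (τ - ξ (a + 1)) * p (a + 1) + q (a + 1) =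
        (ξ (a + 1) - ξ (a + 2)) * p (a + 2) := by
      rw [hq (a + 1) (by omega)]; ring
    have h₀ : ξ (a + 1) * p (a + 1) + (τ - ξ (a + 1)) * p a + q a =
        (ξ a - ξ (a + 1)) * p a := by
      rw [hq a (by omega)]; ring
    have hdiv : ∀ x {r : ℝ}, 0 < r → (x * r) ^ 2 / r = x ^ 2 * r := fun x r hr => by field_simp
    rw [h₁, h₀, hdiv _ (hp _ (by omega)), hdiv _ (hp _ (by omega))] at hloc
    simp only [hU, hW]
    linarith
  have hUW : ∑ b ∈ range (n + 2), (U b + W b) = -τ * ∑ b ∈ range (n + 2), q b := by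
    rw [mul_sum]
    refine sum_congr rfl fun b hb => ?_
    simp only [hU, hW, hq b (mem_range.mp hb)]
    ring
  have hU₀ : 0 ≤ U 0 := by
    simp only [hU, hξ₀, zero_mul, sub_zero]
    exact mul_nonneg (sq_nonneg _) (hp 1 (by omega)).le
  have hWn : 0 ≤ W (n + 1) := by
    simp only [hW, hξ, sub_self, zero_mul, sub_zero]
    exact mul_nonneg (sq_nonneg _) (hp (n + 1) (by omega)).le
  calc ∑ a ∈ range (n + 1), s a ≤ ∑ a ∈ range (n + 1), (U (a + 1) + W a) := sum_le_sum hs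
    _ ≤ ∑ b ∈ range (n + 2), (U b + W b) := by
      rw [sum_add_distrib, sum_add_distrib, sum_range_succ' U, sum_range_succ W (n + 1)]
      linarith
    _ = _ := hUW

lemma sum_range_mul_sum_range_le_sq {n : ℕ} {p q s : ℕ → ℝ} (hp : ∀ a ≤ n + 2, 0 < p a)
    (h : ∀ a ≤ n, ∀ x y : ℝ,
      x * (x * p (a + 2) + y * p (a + 1) + q (a + 1)) + y * (x * p (a + 1) + y * p a + q a) +
        (x * q (a + 1) + y * q a + s a) ≤
      (x * p (a + 2) + y * p (a + 1) + q (a + 1)) ^ 2 / p (a + 2) +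
        (x * p (a + 1) + y * p a + q a) ^ 2 / p a) :
    (∑ a ∈ range (n + 3), p a) * ∑ a ∈ range (n + 1), s a ≤ (∑ a ∈ range (n + 2), q a) ^ 2 := by
  obtain ⟨ξ, τ, hξ₀, hξ, hτ, hq⟩ := exists_chain_potential q hp
  have hA : 0 ≤ ∑ a ∈ range (n + 3), p a :=
    sum_nonneg fun a ha => (hp a (by simpa [Nat.lt_succ_iff] using ha)).le
  calc (∑ a ∈ range (n + 3), p a) * ∑ a ∈ range (n + 1), s a
      ≤ (∑ a ∈ range (n + 3), p a) * (-τ * ∑ a ∈ range (n + 2), q a) :=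
        mul_le_mul_of_nonneg_left (sum_le_of_chain_potential hp h hξ₀ hξ hq) hA
    _ = -(τ * ∑ a ∈ range (n + 3), p a) * ∑ a ∈ range (n + 2), q a := by ring
    _ = (∑ a ∈ range (n + 2), q a) ^ 2 := by rw [hτ]; ring

/-- A discrete analogue of Prékopa's theorem on the marginals of log-concave functions. -/
lemma sum_antidiagonal_mul_sum_antidiagonal_le_sq {n : ℕ} {p q s : ℕ → ℕ → ℝ}
    (hp : ∀ a b, a + b = n + 2 → 0 < p a b)
    (h : ∀ a b, a + b = n → ∀ x y : ℝ,
      x * (x * p (a + 2) b + y * p (a + 1) (b + 1) + q (a + 1) b) +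
          y * (x * p (a + 1) (b + 1) + y * p a (b + 2) + q a (b + 1)) +
          (x * q (a + 1) b + y * q a (b + 1) + s a b) ≤
        (x * p (a + 2) b + y * p (a + 1) (b + 1) + q (a + 1) b) ^ 2 / p (a + 2) b +
          (x * p (a + 1) (b + 1) + y * p a (b + 2) + q a (b + 1)) ^ 2 / p a (b + 2)) :
    (∑ z ∈ antidiagonal (n + 2), p z.1 z.2) * ∑ z ∈ antidiagonal n, s z.1 z.2 ≤
      (∑ z ∈ antidiagonal (n + 1), q z.1 z.2) ^ 2 := by
  simp only [Nat.sum_antidiagonal_eq_sum_range_succ p, Nat.sum_antidiagonal_eq_sum_range_succ q,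
    Nat.sum_antidiagonal_eq_sum_range_succ s]
  refine sum_range_mul_sum_range_le_sq (p := fun a => p a (n + 2 - a))
    (q := fun a => q a (n + 1 - a)) (s := fun a => s a (n - a))
    (fun a ha => hp _ _ (by omega)) fun a ha x y => ?_
  simpa only [show n + 2 - (a + 2) = n - a by omega, show n + 2 - (a + 1) = n - a + 1 by omega,
    show n + 2 - a = n - a + 2 by omega, show n + 1 - (a + 1) = n - a by omega,
    show n + 1 - a = n - a + 1 by omega] using h a (n - a) (by omega) x y

end DiscretePrekopa

section Lorentzian

variable {ι : Type*} [DecidableEq ι] {S : Finset ι} {N : ℕ} {f : (ι → ℕ) → ℝ} {i₀ i₁ : ι}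

/-- The quadratic form of second shifts of `f` at `α`. For the generating polynomial
`∑ a, f a * ∏ i, x i ^ a i / (a i)!` it is the Hessian at the origin of the `α`-th derivative. -/
def hessForm (S : Finset ι) (f : (ι → ℕ) → ℝ) (α : ι → ℕ) : LinearMap.BilinForm ℝ (ι → ℝ) :=
  ∑ i ∈ S, ∑ j ∈ S, f (α + Pi.single i 1 + Pi.single j 1) •
    LinearMap.BilinForm.linMulLin (LinearMap.proj i) (LinearMap.proj j)

/-- The first-order analogue of `hessForm`. -/
def gradForm (S : Finset ι) (f : (ι → ℕ) → ℝ) (α : ι → ℕ) (v : ι → ℝ) : ℝ :=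
  ∑ j ∈ S, f (α + Pi.single j 1) * v j

lemma hessForm_apply (α : ι → ℕ) (v w : ι → ℝ) :
    hessForm S f α v w =
      ∑ i ∈ S, ∑ j ∈ S, f (α + Pi.single i 1 + Pi.single j 1) * (v i * w j) := by
  simp [hessForm, LinearMap.sum_apply]

lemma hessForm_isSymm (α : ι → ℕ) : (hessForm S f α).IsSymm := by
  refine ⟨fun v w => ?_⟩
  simp only [hessForm_apply]
  rw [sum_comm]
  refine sum_congr rfl fun i _ => sum_congr rfl fun j _ => ?_
  rw [add_right_comm, mul_comm (v j)]

lemma hessForm_congr {v v' w w' : ι → ℝ} (hv : ∀ i ∈ S, v i = v' i) (hw : ∀ i ∈ S, w i = w' i)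
    (α : ι → ℕ) : hessForm S f α v w = hessForm S f α v' w' := by
  simp only [hessForm_apply]
  exact sum_congr rfl fun i hi => sum_congr rfl fun j hj => by rw [hv i hi, hw j hj]

lemma hessForm_single_left {i : ι} (hi : i ∈ S) (α : ι → ℕ) (v : ι → ℝ) :
    hessForm S f α (Pi.single i 1) v = gradForm S f (α + Pi.single i 1) v := by
  simp [hessForm_apply, gradForm, Pi.single_apply, hi]

lemma gradForm_single {i : ι} (hi : i ∈ S) (α : ι → ℕ) :
    gradForm S f α (Pi.single i 1) = f (α + Pi.single i 1) := by
  simp [gradForm, Pi.single_apply, hi]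

lemma hessForm_single_single {i j : ι} (hi : i ∈ S) (hj : j ∈ S) (α : ι → ℕ) :
    hessForm S f α (Pi.single i 1) (Pi.single j 1) = f (α + Pi.single i 1 + Pi.single j 1) := by
  rw [hessForm_single_left hi, gradForm_single hj]

lemma add_single_mem_piAntidiag {β : ι → ℕ} (hβ : β ∈ S.piAntidiag N) {i : ι} (hi : i ∈ S) :
    β + Pi.single i 1 ∈ S.piAntidiag (N + 1) := by
  rw [mem_piAntidiag] at hβ ⊢
  refine ⟨?_, fun j hj => ?_⟩
  · simp [sum_add_distrib, hβ.1, sum_pi_single', hi]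
  · obtain rfl | hji := eq_or_ne j i
    · exact hi
    · exact hβ.2 j (by simpa [hji] using hj)

/-- The local form of the Lorentzian property of Brändén and Huh for the values of `f` on
multi-indices of total degree `N + 2` supported in `S`: the values are positive and every
second-order form has Lorentzian signature. -/
structure IsLorentzianOn (S : Finset ι) (N : ℕ) (f : (ι → ℕ) → ℝ) : Prop where
  pos : ∀ α ∈ S.piAntidiag (N + 2), 0 < f α
  nonposOnHyperplane : ∀ α ∈ S.piAntidiag N, NonposOnHyperplane (hessForm S f α)

lemma IsLorentzianOn.pos_add_single_add_single (hf : IsLorentzianOn S N f) {α : ι → ℕ}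
    (hα : α ∈ S.piAntidiag N) {i j : ι} (hi : i ∈ S) (hj : j ∈ S) :
    0 < f (α + Pi.single i 1 + Pi.single j 1) :=
  hf.pos _ (add_single_mem_piAntidiag (add_single_mem_piAntidiag hα hi) hj)

lemma IsLorentzianOn.mul_le_sq (hf : IsLorentzianOn S N f) {α : ι → ℕ} (hα : α ∈ S.piAntidiag N)
    {i j : ι} (hi : i ∈ S) (hj : j ∈ S) :
    f (α + Pi.single i 1 + Pi.single i 1) * f (α + Pi.single j 1 + Pi.single j 1) ≤
      f (α + Pi.single i 1 + Pi.single j 1) ^ 2 := by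
  have h := (hf.nonposOnHyperplane α hα).mul_self_le_sq (hessForm_isSymm α) (Pi.single i 1)
    (w := Pi.single j 1)
  simp only [hessForm_single_single, hi, hj] at h
  exact h (hf.pos_add_single_add_single hα hj hj).le

/-- The multi-index `c` with its entries at `i₀` and `i₁` replaced by `a` and `b`. -/
def splitVar (i₀ i₁ : ι) (c : ι → ℕ) (a b : ℕ) : ι → ℕ :=
  Function.update (Function.update c i₀ a) i₁ b

/-- The coefficients obtained from `f` by identifying the variable `i₁` with `i₀`. -/
def mergeVar (i₀ i₁ : ι) (f : (ι → ℕ) → ℝ) (c : ι → ℕ) : ℝ :=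
  ∑ z ∈ antidiagonal (c i₀), f (splitVar i₀ i₁ c z.1 z.2)

lemma splitVar_add_single_left (h : i₀ ≠ i₁) (c : ι → ℕ) (a b : ℕ) :
    splitVar i₀ i₁ c a b + Pi.single i₀ 1 = splitVar i₀ i₁ c (a + 1) b := by
  ext j
  simp only [splitVar, Pi.add_apply, Function.update_apply, Pi.single_apply]
  grind

lemma splitVar_add_single_right (c : ι → ℕ) (a b : ℕ) :
    splitVar i₀ i₁ c a b + Pi.single i₁ 1 = splitVar i₀ i₁ c a (b + 1) := by
  ext j
  simp only [splitVar, Pi.add_apply, Function.update_apply, Pi.single_apply]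
  grind

lemma splitVar_add_single_self (c : ι → ℕ) (a b : ℕ) :
    splitVar i₀ i₁ (c + Pi.single i₀ 1) a b = splitVar i₀ i₁ c a b := by
  ext j
  simp only [splitVar, Pi.add_apply, Function.update_apply, Pi.single_apply]
  grind

lemma splitVar_add_single_of_ne {j : ι} (h₀ : j ≠ i₀) (h₁ : j ≠ i₁) (c : ι → ℕ) (a b : ℕ) :
    splitVar i₀ i₁ (c + Pi.single j 1) a b = splitVar i₀ i₁ c a b + Pi.single j 1 := by
  ext k
  simp only [splitVar, Pi.add_apply, Function.update_apply, Pi.single_apply]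
  grind

@[simp]
lemma splitVar_apply_left (h : i₀ ≠ i₁) (c : ι → ℕ) (a b : ℕ) : splitVar i₀ i₁ c a b i₀ = a := by
  simp [splitVar, h]

@[simp]
lemma splitVar_apply_right (c : ι → ℕ) (a b : ℕ) : splitVar i₀ i₁ c a b i₁ = b := by
  simp [splitVar]

lemma splitVar_apply_of_ne {j : ι} (h₀ : j ≠ i₀) (h₁ : j ≠ i₁) (c : ι → ℕ) (a b : ℕ) :
    splitVar i₀ i₁ c a b j = c j := by
  simp [splitVar, h₀, h₁]

lemma splitVar_self (c : ι → ℕ) : splitVar i₀ i₁ c (c i₀) (c i₁) = c := by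
  simp [splitVar]

lemma splitVar_splitVar (c : ι → ℕ) (a b a' b' : ℕ) :
    splitVar i₀ i₁ (splitVar i₀ i₁ c a b) a' b' = splitVar i₀ i₁ c a' b' := by
  ext j
  simp only [splitVar, Function.update_apply]
  grind

lemma splitVar_eq_add_single (h : i₀ ≠ i₁) (c : ι → ℕ) (a b : ℕ) :
    splitVar i₀ i₁ c a b = splitVar i₀ i₁ c 0 0 + Pi.single i₀ a + Pi.single i₁ b := by
  ext j
  simp only [splitVar, Pi.add_apply, Function.update_apply, Pi.single_apply]
  grind

lemma sum_splitVar (h₀ : i₀ ∈ S) (h₁ : i₁ ∈ S) (h : i₀ ≠ i₁) (c : ι → ℕ) (a b : ℕ) :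
    ∑ j ∈ S, splitVar i₀ i₁ c a b j + c i₀ = a + b + ∑ j ∈ S.erase i₁, c j := by
  have h₀' : i₀ ∈ S.erase i₁ := mem_erase.mpr ⟨h, h₀⟩
  rw [← add_sum_erase S _ h₁, ← add_sum_erase _ _ h₀', ← add_sum_erase _ c h₀',
    sum_congr rfl fun j hj => ?_]
  · rw [splitVar_apply_left h, splitVar_apply_right]
    ring
  · simp only [mem_erase] at hj
    exact splitVar_apply_of_ne hj.1 hj.2.1 _ _ _

lemma splitVar_mem_piAntidiag (h₀ : i₀ ∈ S) (h₁ : i₁ ∈ S) (h : i₀ ≠ i₁) {γ : ι → ℕ}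
    (hγ : γ ∈ (S.erase i₁).piAntidiag N) {a b k : ℕ} (hab : a + b = γ i₀ + k) :
    splitVar i₀ i₁ γ a b ∈ S.piAntidiag (N + k) := by
  rw [mem_piAntidiag] at hγ ⊢
  refine ⟨by linarith [sum_splitVar h₀ h₁ h γ a b, hγ.1], fun j hj => ?_⟩
  obtain rfl | hj₁ := eq_or_ne j i₁
  · exact h₁
  obtain rfl | hj₀ := eq_or_ne j i₀
  · exact h₀
  exact mem_of_mem_erase (hγ.2 j (splitVar_apply_of_ne hj₀ hj₁ γ a b ▸ hj))

lemma apply_right_eq_zero_of_mem_piAntidiag_erase {γ : ι → ℕ}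
    (hγ : γ ∈ (S.erase i₁).piAntidiag N) : γ i₁ = 0 :=
  of_not_not fun h => notMem_erase i₁ S ((mem_piAntidiag.mp hγ).2 i₁ h)

lemma splitVar_add_zero_mem_piAntidiag (h₀ : i₀ ∈ S) (h₁ : i₁ ∈ S) (h : i₀ ≠ i₁) {a : ι → ℕ}
    (ha : a ∈ S.piAntidiag N) :
    splitVar i₀ i₁ a (a i₀ + a i₁) 0 ∈ (S.erase i₁).piAntidiag N := by
  rw [mem_piAntidiag] at ha ⊢
  have hsum := sum_splitVar h₀ h₁ h a (a i₀ + a i₁) 0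
  rw [← add_sum_erase S _ h₁, splitVar_apply_right] at hsum
  refine ⟨by linarith [add_sum_erase S a h₁, ha.1], fun j hj => ?_⟩
  obtain rfl | hj₁ := eq_or_ne j i₁
  · simp at hj
  refine mem_erase.mpr ⟨hj₁, ?_⟩
  obtain rfl | hj₀ := eq_or_ne j i₀
  · exact h₀
  exact ha.2 j (splitVar_apply_of_ne hj₀ hj₁ a _ _ ▸ hj)

lemma mergeVar_add_single_add_single_self (γ : ι → ℕ) :
    mergeVar i₀ i₁ f (γ + Pi.single i₀ 1 + Pi.single i₀ 1) =
      ∑ z ∈ antidiagonal (γ i₀ + 2), f (splitVar i₀ i₁ γ z.1 z.2) := by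
  simp [mergeVar, splitVar_add_single_self]

lemma gradForm_mergeVar (h₁ : i₁ ∈ S) {v : ι → ℝ} (hv₀ : v i₀ = 0) (hv₁ : v i₁ = 0)
    (γ : ι → ℕ) :
    gradForm (S.erase i₁) (mergeVar i₀ i₁ f) γ v =
      ∑ z ∈ antidiagonal (γ i₀), gradForm S f (splitVar i₀ i₁ γ z.1 z.2) v := by
  simp only [gradForm]
  rw [sum_comm, ← add_sum_erase S _ h₁]
  simp only [hv₁, mul_zero, sum_const_zero, zero_add, ← sum_mul]
  refine sum_congr rfl fun j hj => ?_
  obtain rfl | hj₀ := eq_or_ne j i₀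
  · rw [hv₀, mul_zero, mul_zero]
  · simp only [mergeVar, splitVar_add_single_of_ne hj₀ (ne_of_mem_erase hj), Pi.add_apply,
      Pi.single_eq_of_ne hj₀.symm, add_zero]

lemma hessForm_eq_sum_gradForm (α : ι → ℕ) (v w : ι → ℝ) :
    hessForm S f α v w = ∑ i ∈ S, v i * gradForm S f (α + Pi.single i 1) w := by
  simp only [hessForm_apply, gradForm, mul_sum]
  exact sum_congr rfl fun i _ => sum_congr rfl fun j _ => by ring

lemma hessForm_mergeVar (h₁ : i₁ ∈ S) {v : ι → ℝ} (hv₀ : v i₀ = 0) (hv₁ : v i₁ = 0)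
    (γ : ι → ℕ) :
    hessForm (S.erase i₁) (mergeVar i₀ i₁ f) γ v v =
      ∑ z ∈ antidiagonal (γ i₀), hessForm S f (splitVar i₀ i₁ γ z.1 z.2) v v := by
  simp only [hessForm_eq_sum_gradForm, gradForm_mergeVar h₁ hv₀ hv₁]
  rw [sum_comm, ← add_sum_erase S _ h₁]
  simp only [hv₁, zero_mul, sum_const_zero, zero_add, ← mul_sum]
  refine sum_congr rfl fun j hj => ?_
  obtain rfl | hj₀ := eq_or_ne j i₀
  · rw [hv₀, zero_mul, zero_mul]
  · simp only [splitVar_add_single_of_ne hj₀ (ne_of_mem_erase hj), Pi.add_apply,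
      Pi.single_eq_of_ne hj₀.symm, add_zero]

lemma IsLorentzianOn.chain_inequality (hf : IsLorentzianOn S N f) (h₀ : i₀ ∈ S) (h₁ : i₁ ∈ S)
    {α : ι → ℕ} (hα : α ∈ S.piAntidiag N) (v : ι → ℝ) (x y : ℝ) :
    let e₀ := Pi.single i₀ 1
    let e₁ := Pi.single i₁ 1
    let L₀ := x * f (α + e₀ + e₀) + y * f (α + e₀ + e₁) + gradForm S f (α + e₀) v
    let L₁ := x * f (α + e₀ + e₁) + y * f (α + e₁ + e₁) + gradForm S f (α + e₁) v
    x * L₀ + y * L₁ +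
        (x * gradForm S f (α + e₀) v + y * gradForm S f (α + e₁) v + hessForm S f α v v) ≤
      L₀ ^ 2 / f (α + e₀ + e₀) + L₁ ^ 2 / f (α + e₁ + e₁) := by
  intro e₀ e₁ _ _
  set b₀ : ι → ℝ := Pi.single i₀ 1
  set b₁ : ι → ℝ := Pi.single i₁ 1
  have hsymm := hessForm_isSymm (S := S) (f := f) α
  have h₀₀ : hessForm S f α b₀ b₀ = f (α + e₀ + e₀) := hessForm_single_single h₀ h₀ α
  have h₀₁ : hessForm S f α b₀ b₁ = f (α + e₀ + e₁) := hessForm_single_single h₀ h₁ α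
  have h₁₁ : hessForm S f α b₁ b₁ = f (α + e₁ + e₁) := hessForm_single_single h₁ h₁ α
  have h₁₀ : hessForm S f α b₁ b₀ = f (α + e₀ + e₁) := (hsymm.eq b₁ b₀).trans h₀₁
  have h₀v : hessForm S f α b₀ v = gradForm S f (α + e₀) v := hessForm_single_left h₀ α v
  have h₁v : hessForm S f α b₁ v = gradForm S f (α + e₁) v := hessForm_single_left h₁ α v
  have hv₀ : hessForm S f α v b₀ = gradForm S f (α + e₀) v := (hsymm.eq v b₀).trans h₀v
  have hv₁ : hessForm S f α v b₁ = gradForm S f (α + e₁) v := (hsymm.eq v b₁).trans h₁v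
  have h := (hf.nonposOnHyperplane α hα).self_le_sq_div_add_sq_div hsymm (e₀ := b₀) (e₁ := b₁)
    (h₀₀ ▸ hf.pos_add_single_add_single hα h₀ h₀) (h₁₁ ▸ hf.pos_add_single_add_single hα h₁ h₁)
    (h₀₁ ▸ (hf.pos_add_single_add_single hα h₀ h₁).le) (x • b₀ + y • b₁ + v)
  simp only [map_add, map_smul, LinearMap.add_apply, LinearMap.smul_apply, smul_eq_mul,
    h₀₀, h₀₁, h₁₁, h₁₀, h₀v, h₁v, hv₀, hv₁] at h
  exact h

lemma IsLorentzianOn.mergeVar_mul_hessForm_le_sq (hf : IsLorentzianOn S N f) (h₀ : i₀ ∈ S)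
    (h₁ : i₁ ∈ S) (h : i₀ ≠ i₁) {γ : ι → ℕ} (hγ : γ ∈ (S.erase i₁).piAntidiag N) {v : ι → ℝ}
    (hv₀ : v i₀ = 0) (hv₁ : v i₁ = 0) :
    mergeVar i₀ i₁ f (γ + Pi.single i₀ 1 + Pi.single i₀ 1) *
        hessForm (S.erase i₁) (mergeVar i₀ i₁ f) γ v v ≤
      gradForm (S.erase i₁) (mergeVar i₀ i₁ f) (γ + Pi.single i₀ 1) v ^ 2 := by
  rw [mergeVar_add_single_add_single_self, hessForm_mergeVar h₁ hv₀ hv₁,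
    gradForm_mergeVar h₁ hv₀ hv₁]
  simp only [splitVar_add_single_self, Pi.add_apply, Pi.single_eq_same]
  refine sum_antidiagonal_mul_sum_antidiagonal_le_sq (p := fun a b => f (splitVar i₀ i₁ γ a b))
    (q := fun a b => gradForm S f (splitVar i₀ i₁ γ a b) v)
    (s := fun a b => hessForm S f (splitVar i₀ i₁ γ a b) v v)
    (fun a b hab => hf.pos _ (splitVar_mem_piAntidiag h₀ h₁ h hγ hab)) fun a b hab x y => ?_
  simpa only [splitVar_add_single_left h, splitVar_add_single_right] using
    hf.chain_inequality h₀ h₁ (splitVar_mem_piAntidiag (k := 0) h₀ h₁ h hγ hab) v x y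

theorem IsLorentzianOn.merge (hf : IsLorentzianOn S N f) (h₀ : i₀ ∈ S) (h₁ : i₁ ∈ S)
    (h : i₀ ≠ i₁) : IsLorentzianOn (S.erase i₁) N (mergeVar i₀ i₁ f) := by
  have h₀' : i₀ ∈ S.erase i₁ := mem_erase.mpr ⟨h, h₀⟩
  have hpos : ∀ γ ∈ (S.erase i₁).piAntidiag (N + 2), 0 < mergeVar i₀ i₁ f γ := fun γ hγ =>
    sum_pos (fun z hz => hf.pos _ <| splitVar_mem_piAntidiag (k := 0) h₀ h₁ h hγ
      (mem_antidiagonal.mp hz)) ⟨(0, γ i₀), by simp⟩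
  refine ⟨hpos, fun γ hγ => ?_⟩
  refine nonposOnHyperplane_of_mul_self_le_sq (hessForm_isSymm γ) (e := Pi.single i₀ 1) ?_
    fun v => ⟨v i₀, ?_⟩
  · rw [hessForm_single_single h₀' h₀']
    exact hpos _ (add_single_mem_piAntidiag (add_single_mem_piAntidiag hγ h₀') h₀')
  · set u := v - v i₀ • (Pi.single i₀ 1 : ι → ℝ) with hu
    have hu' : ∀ j ∈ S.erase i₁, u j = Function.update u i₁ 0 j := fun j hj =>
      (Function.update_of_ne (ne_of_mem_erase hj) _ _).symm
    rw [hessForm_single_single h₀' h₀', hessForm_congr hu' hu',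
      hessForm_congr (fun _ _ => rfl) hu', hessForm_single_left h₀']
    exact hf.mergeVar_mul_hessForm_le_sq h₀ h₁ h hγ (by simp [hu, h]) (by simp)

end Lorentzian

section Pushforward

variable {ι κ : Type*} [Fintype ι] [DecidableEq κ]

/-- The multi-index of the monomial `∏ i, x (φ i) ^ a i`: the sums of `a` over the fibers of `φ`. -/
def fiberSum (φ : ι → κ) (a : ι → ℕ) (k : κ) : ℕ := ∑ i with φ i = k, a i

variable {φ : ι → κ}

lemma fiberSum_add (a b : ι → ℕ) : fiberSum φ (a + b) = fiberSum φ a + fiberSum φ b := by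
  ext k
  simp [fiberSum, sum_add_distrib]

variable [DecidableEq ι] {S : Finset ι} {N : ℕ} {f : (ι → ℕ) → ℝ} {i₀ i₁ : ι}

lemma fiberSum_single (i : ι) (r : ℕ) :
    fiberSum φ (Pi.single i r) = Pi.single (φ i) r := by
  ext k
  rw [fiberSum, sum_pi_single']
  simp [Pi.single_apply, eq_comm]

lemma fiberSum_splitVar (h : i₀ ≠ i₁) (hφ : φ i₀ = φ i₁) (c : ι → ℕ) {a b : ℕ}
    (hab : a + b = c i₀ + c i₁) : fiberSum φ (splitVar i₀ i₁ c a b) = fiberSum φ c := by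
  conv_rhs => rw [← splitVar_self (i₀ := i₀) (i₁ := i₁) c]
  rw [splitVar_eq_add_single h c a, splitVar_eq_add_single h c (c i₀)]
  simp only [fiberSum_add, fiberSum_single, hφ, add_assoc, ← Pi.single_add, hab]

lemma fiberSum_apply_of_injOn (hφ : Set.InjOn φ S) {a : ι → ℕ} (ha : a ∈ S.piAntidiag N) {i : ι}
    (hi : i ∈ S) : fiberSum φ a (φ i) = a i := by
  refine sum_eq_single_of_mem i (by simp) fun j hj hji => ?_
  exact of_not_not fun h =>
    hji (hφ ((mem_piAntidiag.mp ha).2 j h) hi (mem_filter.mp hj).2)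

lemma exists_mem_piAntidiag_fiberSum_eq (hφ : Set.InjOn φ S) {c : κ → ℕ}
    (hc : c ∈ (S.image φ).piAntidiag N) : ∃ a ∈ S.piAntidiag N, fiberSum φ a = c := by
  rw [mem_piAntidiag, sum_image hφ] at hc
  have ha : (fun i => if i ∈ S then c (φ i) else 0) ∈ S.piAntidiag N :=
    mem_piAntidiag.mpr ⟨(sum_congr rfl fun i hi => if_pos hi).trans hc.1, by simp +contextual⟩
  refine ⟨_, ha, funext fun k => ?_⟩
  by_cases hk : k ∈ S.image φ
  · obtain ⟨i, hi, rfl⟩ := mem_image.mp hk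
    rw [fiberSum_apply_of_injOn hφ ha hi, if_pos hi]
  · rw [of_not_not fun h => hk (hc.2 k h)]
    refine sum_eq_zero fun i hi => if_neg fun hiS => hk ?_
    exact mem_image.mpr ⟨i, hiS, (mem_filter.mp hi).2⟩

variable [Fintype κ]

/-- The coefficients of degree `N`, supported in `S`, after substituting the variable `φ i` for
the variable `i`. -/
def pushCoeff (S : Finset ι) (N : ℕ) (f : (ι → ℕ) → ℝ) (φ : ι → κ) (c : κ → ℕ) : ℝ :=
  ∑ a ∈ S.piAntidiag N with fiberSum φ a = c, f a

lemma pushCoeff_mergeVar (h₀ : i₀ ∈ S) (h₁ : i₁ ∈ S) (h : i₀ ≠ i₁) (hφ : φ i₀ = φ i₁) :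
    pushCoeff (S.erase i₁) N (mergeVar i₀ i₁ f) φ = pushCoeff S N f φ := by
  ext c
  simp only [pushCoeff, mergeVar]
  rw [sum_sigma']
  refine sum_bij' (fun p _ => splitVar i₀ i₁ p.1 p.2.1 p.2.2)
    (fun a _ => ⟨splitVar i₀ i₁ a (a i₀ + a i₁) 0, (a i₀, a i₁)⟩) ?_ ?_ ?_ ?_ fun _ _ => rfl
  · rintro ⟨γ, z⟩ hz
    simp only [mem_sigma, mem_filter, HasAntidiagonal.mem_antidiagonal] at hz ⊢
    refine ⟨splitVar_mem_piAntidiag (k := 0) h₀ h₁ h hz.1.1 hz.2, ?_⟩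
    rw [fiberSum_splitVar h hφ, hz.1.2]
    rw [hz.2, apply_right_eq_zero_of_mem_piAntidiag_erase hz.1.1, add_zero]
  · intro a ha
    simp only [mem_sigma, mem_filter, HasAntidiagonal.mem_antidiagonal] at ha ⊢
    refine ⟨⟨splitVar_add_zero_mem_piAntidiag h₀ h₁ h ha.1, ?_⟩, by simp [h]⟩
    rw [fiberSum_splitVar h hφ _ (add_zero _), ha.2]
  · rintro ⟨γ, z⟩ hz
    simp only [mem_sigma, mem_filter, HasAntidiagonal.mem_antidiagonal] at hz
    have hγ := apply_right_eq_zero_of_mem_piAntidiag_erase hz.1.1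
    simp only [splitVar_splitVar, splitVar_apply_left h, splitVar_apply_right, hz.2]
    conv in splitVar i₀ i₁ γ (γ i₀) 0 => rw [← hγ, splitVar_self]
  · intro a _
    rw [splitVar_splitVar, splitVar_self]

lemma pushCoeff_fiberSum_of_injOn (hφ : Set.InjOn φ S) {a : ι → ℕ} (ha : a ∈ S.piAntidiag N) :
    pushCoeff S N f φ (fiberSum φ a) = f a := by
  refine sum_eq_single_of_mem a (by simp [ha]) fun b hb hba => absurd ?_ hba
  obtain ⟨hb, hab⟩ := mem_filter.mp hb
  ext i
  by_cases hi : i ∈ S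
  · rw [← fiberSum_apply_of_injOn hφ hb hi, hab, fiberSum_apply_of_injOn hφ ha hi]
  · rw [of_not_not fun h => hi ((mem_piAntidiag.mp hb).2 i h),
      of_not_not fun h => hi ((mem_piAntidiag.mp ha).2 i h)]

lemma hessForm_pushCoeff_of_injOn (hφ : Set.InjOn φ S) {a : ι → ℕ} (ha : a ∈ S.piAntidiag N)
    (v w : κ → ℝ) :
    hessForm (S.image φ) (pushCoeff S (N + 2) f φ) (fiberSum φ a) v w =
      hessForm S f a (v ∘ φ) (w ∘ φ) := by
  simp only [hessForm_apply, sum_image hφ, Function.comp_apply]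
  refine sum_congr rfl fun i hi => sum_congr rfl fun j hj => ?_
  rw [← fiberSum_single, ← fiberSum_single, ← fiberSum_add, ← fiberSum_add,
    pushCoeff_fiberSum_of_injOn hφ (add_single_mem_piAntidiag (add_single_mem_piAntidiag ha hi) hj)]

lemma IsLorentzianOn.pushCoeff_of_injOn (hf : IsLorentzianOn S N f) (hφ : Set.InjOn φ S) :
    IsLorentzianOn (S.image φ) N (pushCoeff S (N + 2) f φ) where
  pos c hc := by
    obtain ⟨a, ha, rfl⟩ := exists_mem_piAntidiag_fiberSum_eq hφ hc
    rw [pushCoeff_fiberSum_of_injOn hφ ha]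
    exact hf.pos a ha
  nonposOnHyperplane c hc := by
    obtain ⟨a, ha, rfl⟩ := exists_mem_piAntidiag_fiberSum_eq hφ hc
    obtain ⟨l, hl⟩ := hf.nonposOnHyperplane a ha
    refine ⟨l ∘ₗ LinearMap.funLeft ℝ ℝ φ, fun v hv => ?_⟩
    rw [hessForm_pushCoeff_of_injOn hφ ha]
    exact hl _ hv

theorem IsLorentzianOn.pushforward (hf : IsLorentzianOn S N f) (φ : ι → κ) :
    IsLorentzianOn (S.image φ) N (pushCoeff S (N + 2) f φ) := by
  induction S using Finset.strongInduction generalizing f with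
  | H S ih =>
    by_cases hφ : Set.InjOn φ S
    · exact hf.pushCoeff_of_injOn hφ
    obtain ⟨i₀, h₀, i₁, h₁, hφ, h⟩ : ∃ i₀ ∈ S, ∃ i₁ ∈ S, φ i₀ = φ i₁ ∧ i₀ ≠ i₁ := by
      simpa only [Set.InjOn, not_forall, mem_coe, exists_prop] using hφ
    have himage : (S.erase i₁).image φ = S.image φ := by
      refine (image_subset_image (erase_subset _ _)).antisymm fun k hk => ?_
      obtain ⟨i, hi, rfl⟩ := mem_image.mp hk
      obtain rfl | hi₁ := eq_or_ne i i₁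
      · exact mem_image.mpr ⟨i₀, mem_erase.mpr ⟨h, h₀⟩, hφ⟩
      · exact mem_image_of_mem φ (mem_erase.mpr ⟨hi₁, hi⟩)
    rw [← himage, ← pushCoeff_mergeVar h₀ h₁ h hφ]
    exact ih _ (erase_ssubset h₁) (hf.merge h₀ h₁ h)

end Pushforward

section Penalty

variable {ι E : Type*} [Fintype ι] [Fintype E] [DecidableEq E] {c : ι → E} {k : E → ℕ} {y : ι → ℝ}
  {s : ℝ}

/-- A Gaussian penalisation of the exponential weight `exp (∑ i, a i * y i)`, concentrating as
`s → ∞` on the multi-indices `a` whose sum over each cell `c ⁻¹' {e}` is `k e`. -/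
def penalty (c : ι → E) (k : E → ℕ) (y : ι → ℝ) (s : ℝ) (a : ι → ℕ) : ℝ :=
  exp (-s * ∑ e, ((fiberSum c a e : ℝ) - k e) ^ 2 + ∑ i, (a i : ℝ) * y i)

lemma tendsto_penalty_atTop (c : ι → E) (k : E → ℕ) (y : ι → ℝ) (a : ι → ℕ) :
    Tendsto (fun s => penalty c k y s a) atTop
      (nhds (if fiberSum c a = k then exp (∑ i, (a i : ℝ) * y i) else 0)) := by
  unfold penalty
  split_ifs with h
  · simp [h]
  · obtain ⟨e, he⟩ := Function.ne_iff.mp h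
    have hpos : 0 < ∑ e, ((fiberSum c a e : ℝ) - k e) ^ 2 :=
      sum_pos' (fun _ _ => sq_nonneg _) ⟨e, mem_univ e, by
        have : (fiberSum c a e : ℝ) - k e ≠ 0 := sub_ne_zero.mpr (by exact_mod_cast he)
        positivity⟩
    exact tendsto_exp_atBot.comp (tendsto_atBot_add_const_right _ _
      (tendsto_neg_atTop_atBot.atBot_mul_const hpos))

lemma sum_sum_ite_fiber_eq_sum_sq (c : ι → E) (w : ι → ℝ) :
    ∑ i, ∑ j, (if c i = c j then w i * w j else 0) = ∑ e, (∑ i with c i = e, w i) ^ 2 := by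
  rw [← sum_fiberwise univ c]
  refine sum_congr rfl fun e _ => ?_
  rw [sq, sum_mul_sum]
  refine sum_congr rfl fun i hi => ?_
  rw [sum_filter, (mem_filter.mp hi).2]
  exact sum_congr rfl fun j _ => if_congr eq_comm rfl rfl

variable [DecidableEq ι]

lemma exists_penalty_add_single_add_single (c : ι → E) (k : E → ℕ) (y : ι → ℝ) (s : ℝ)
    (α : ι → ℕ) : ∃ μ : ι → ℝ, ∀ i j, penalty c k y s (α + Pi.single i 1 + Pi.single j 1) =
      penalty c k y s α * ((if c i = c j then exp (-2 * s) else 1) * (μ i * μ j)) := by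
  set D : E → ℝ := fun e => (fiberSum c α e : ℝ) - k e with hD
  refine ⟨fun i => exp (-s * (2 * D (c i) + 1) + y i), fun i j => ?_⟩
  have hsq : ∀ e, ((fiberSum c (α + Pi.single i 1 + Pi.single j 1) e : ℝ) - k e) ^ 2 =
      D e ^ 2 + (if e = c i then 2 * D e + 1 else 0) + (if e = c j then 2 * D e + 1 else 0) +
        (if e = c i then (if e = c j then 2 else 0) else 0) := fun e => by
    simp only [fiberSum_add, fiberSum_single, Pi.add_apply, Pi.single_apply, hD]
    split_ifs <;> push_cast <;> ring
  have hlin : ∑ l, (((α + Pi.single i 1 + Pi.single j 1 : ι → ℕ) l : ℕ) : ℝ) * y l =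
      ∑ l, (α l : ℝ) * y l + y i + y j := by
    simp [add_mul, sum_add_distrib, Pi.single_apply]
  have hη : (if c i = c j then exp (-2 * s) else 1) = exp (if c i = c j then -2 * s else 0) := by
    split_ifs <;> simp
  rw [penalty, penalty, hlin, hη, ← exp_add, ← exp_add, ← exp_add]
  simp only [hsq, sum_add_distrib, sum_ite_eq', mem_univ, if_true]
  congr 1
  split_ifs <;> ring

lemma isLorentzianOn_penalty (c : ι → E) (k : E → ℕ) (y : ι → ℝ) (hs : 0 ≤ s) (N : ℕ) :
    IsLorentzianOn univ N (penalty c k y s) := by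
  refine ⟨fun _ _ => exp_pos _, fun α _ => ?_⟩
  obtain ⟨μ, hμ⟩ := exists_penalty_add_single_add_single c k y s α
  refine ⟨∑ i, μ i • LinearMap.proj i, fun v hv => ?_⟩
  simp only [LinearMap.sum_apply, LinearMap.smul_apply, LinearMap.proj_apply, smul_eq_mul] at hv
  set w : ι → ℝ := fun i => μ i * v i
  have hform : hessForm univ (penalty c k y s) α v v = penalty c k y s α *
      ((∑ i, w i) ^ 2 - (1 - exp (-2 * s)) * ∑ e, (∑ i with c i = e, w i) ^ 2) := by
    rw [← sum_sum_ite_fiber_eq_sum_sq, sq, sum_mul_sum, hessForm_apply]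
    simp only [mul_sum, ← sum_sub_distrib, hμ]
    refine sum_congr rfl fun i _ => sum_congr rfl fun j _ => ?_
    split_ifs <;> simp only [w] <;> ring
  have hη : exp (-2 * s) ≤ 1 := exp_le_one_iff.mpr (by linarith)
  rw [hform, hv]
  refine mul_nonpos_of_nonneg_of_nonpos (exp_pos _).le ?_
  have := mul_nonneg (sub_nonneg.mpr hη) (sum_nonneg fun e (_ : e ∈ univ) =>
    sq_nonneg (∑ i with c i = e, w i))
  linarith

end Penalty

section LogConcave

lemma mul_succ_le_succ_mul_of_logConcave {u : ℕ → ℝ} {n : ℕ} (hpos : ∀ r ≤ n, 0 < u r)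
    (hu : ∀ r, r + 2 ≤ n → u r * u (r + 2) ≤ u (r + 1) ^ 2) {a b : ℕ} (hab : a ≤ b)
    (hb : b + 1 ≤ n) : u a * u (b + 1) ≤ u (a + 1) * u b := by
  induction b, hab using Nat.le_induction with
  | base => rw [mul_comm]
  | succ b hab ih =>
    have hb' := hpos b (by omega)
    have hb'' := hpos (b + 1) (by omega)
    refine le_of_mul_le_mul_right ?_ hb'
    calc u a * u (b + 2) * u b = u a * (u b * u (b + 2)) := by ring
      _ ≤ u a * u (b + 1) ^ 2 :=
        mul_le_mul_of_nonneg_left (hu b (by omega)) (hpos a (by omega)).le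
      _ = u a * u (b + 1) * u (b + 1) := by ring
      _ ≤ u (a + 1) * u b * u (b + 1) := mul_le_mul_of_nonneg_right (ih (by omega)) hb''.le
      _ = u (a + 1) * u (b + 1) * u b := by ring

end LogConcave

section Collapse

variable {ι V : Type*} [DecidableEq V] {U : Finset V} {v₀ : V}

/-- Identify all elements outside `U` with `v₀`. -/
def collapse (U : Finset V) (v₀ v : V) : V := if v ∈ U then v else v₀

/-- The multi-index of total degree `N` on `insert v₀ U` which agrees with `c` on `U`. -/
def collapseDeg (U : Finset V) (v₀ : V) (N : ℕ) (c : V → ℕ) : V → ℕ :=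
  U.piecewise c (Pi.single v₀ (N - ∑ v ∈ U, c v))

lemma collapseDeg_mem_piAntidiag (hv₀ : v₀ ∉ U) {N : ℕ} {c : V → ℕ} (hc : ∑ v ∈ U, c v ≤ N) :
    collapseDeg U v₀ N c ∈ (insert v₀ U).piAntidiag N := by
  rw [mem_piAntidiag, sum_insert hv₀]
  constructor
  · have hU : ∑ v ∈ U, collapseDeg U v₀ N c v = ∑ v ∈ U, c v :=
      sum_congr rfl fun v hv => piecewise_eq_of_mem _ _ _ hv
    rw [hU, collapseDeg, piecewise_eq_of_notMem _ _ _ hv₀, Pi.single_eq_same,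
      Nat.sub_add_cancel hc]
  · intro v hv
    by_contra h
    rw [mem_insert, not_or] at h
    exact hv (by rw [collapseDeg, piecewise_eq_of_notMem _ _ _ h.2, Pi.single_eq_of_ne h.1])

lemma collapseDeg_succ (hv₀ : v₀ ∉ U) {N : ℕ} {c : V → ℕ} (hc : ∑ v ∈ U, c v ≤ N) :
    collapseDeg U v₀ (N + 1) c = collapseDeg U v₀ N c + Pi.single v₀ 1 := by
  ext v
  by_cases hv : v ∈ U
  · have : v ≠ v₀ := fun h => hv₀ (h ▸ hv)
    simp [collapseDeg, hv, this]
  · simp only [collapseDeg, Pi.add_apply, piecewise_eq_of_notMem _ _ _ hv, Pi.single_apply]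
    split_ifs <;> omega

lemma collapseDeg_succ_add_single {i : V} (hi : i ∈ U) (N : ℕ) (c : V → ℕ) :
    collapseDeg U v₀ (N + 1) (c + Pi.single i 1) = collapseDeg U v₀ N c + Pi.single i 1 := by
  have hsum : ∑ v ∈ U, (c v + (Pi.single i 1 : V → ℕ) v) = ∑ v ∈ U, c v + 1 := by
    rw [sum_add_distrib, sum_pi_single', if_pos hi]
  ext v
  by_cases hv : v ∈ U
  · simp [collapseDeg, hv]
  · have : v ≠ i := fun h => hv (h ▸ hi)
    simp only [collapseDeg, hsum, Pi.add_apply, piecewise_eq_of_notMem _ _ _ hv,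
      Pi.single_eq_of_ne this, Nat.add_sub_add_right, add_zero]

lemma IsLorentzianOn.collapseDeg_logConcave {i : V} {f : (V → ℕ) → ℝ} {N : ℕ}
    (hf : IsLorentzianOn (insert v₀ U) N f) (hv₀ : v₀ ∉ U) (hi : i ∈ U)
    {c : V → ℕ} (hc : ∑ v ∈ U, c v ≤ N) :
    f (collapseDeg U v₀ (N + 2) c) *
        f (collapseDeg U v₀ (N + 2) (c + Pi.single i 1 + Pi.single i 1)) ≤
      f (collapseDeg U v₀ (N + 2) (c + Pi.single i 1)) ^ 2 := by
  rw [collapseDeg_succ_add_single hi, collapseDeg_succ_add_single hi,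
    collapseDeg_succ_add_single hi, collapseDeg_succ hv₀ (by omega), collapseDeg_succ hv₀ hc]
  exact hf.mul_le_sq (collapseDeg_mem_piAntidiag hv₀ hc) (mem_insert_self v₀ U)
    (mem_insert_of_mem hi)

lemma IsLorentzianOn.mul_collapseDeg_update_le {i : V} {f : (V → ℕ) → ℝ} {N : ℕ}
    (hf : IsLorentzianOn (insert v₀ U) N f) (hv₀ : v₀ ∉ U) (hi : i ∈ U) (R : V → ℕ) {a b : ℕ}
    (hab : a ≤ b) (hb : b + 1 + ∑ v ∈ U.erase i, R v ≤ N + 2) :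
    f (collapseDeg U v₀ (N + 2) (Function.update R i a)) *
        f (collapseDeg U v₀ (N + 2) (Function.update R i (b + 1))) ≤
      f (collapseDeg U v₀ (N + 2) (Function.update R i (a + 1))) *
        f (collapseDeg U v₀ (N + 2) (Function.update R i b)) := by
  have hsum : ∀ r, ∑ v ∈ U, Function.update R i r v = r + ∑ v ∈ U.erase i, R v := fun r => by
    rw [sum_update_of_mem hi, sdiff_singleton_eq_erase]
  have hsucc : ∀ r, Function.update R i (r + 1) = Function.update R i r + Pi.single i 1 :=
    fun r => by ext v; by_cases h : v = i <;> simp [h]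
  refine mul_succ_le_succ_mul_of_logConcave
    (u := fun r => f (collapseDeg U v₀ (N + 2) (Function.update R i r)))
    (n := N + 2 - ∑ v ∈ U.erase i, R v) (fun r hr => hf.pos _ <|
      collapseDeg_mem_piAntidiag hv₀ (by rw [hsum]; omega)) (fun r hr => ?_) hab (by omega)
  simp only [hsucc]
  exact hf.collapseDeg_logConcave hv₀ hi (by rw [hsum]; omega)

variable [Fintype ι] {g : ι → V}

lemma image_collapse_comp (hg : g.Surjective) (hv₀ : v₀ ∉ U) :
    univ.image (collapse U v₀ ∘ g) = insert v₀ U := by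
  ext v
  simp only [mem_image, mem_univ, true_and, Function.comp_apply, mem_insert, collapse]
  constructor
  · rintro ⟨i, rfl⟩
    split_ifs with h
    exacts [.inr h, .inl rfl]
  · rintro (rfl | hv)
    · obtain ⟨i, rfl⟩ := hg v
      exact ⟨i, if_neg hv₀⟩
    · obtain ⟨i, rfl⟩ := hg v
      exact ⟨i, if_pos hv⟩

lemma sum_fiberSum [Fintype V] (g : ι → V) (a : ι → ℕ) : ∑ v, fiberSum g a v = ∑ i, a i :=
  sum_fiberwise univ g a

lemma fiberSum_collapse_of_mem (hv₀ : v₀ ∉ U) (a : ι → ℕ) {v : V} (hv : v ∈ U) :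
    fiberSum (collapse U v₀ ∘ g) a v = fiberSum g a v := by
  refine sum_congr (filter_congr fun i _ => ?_) fun _ _ => rfl
  simp only [Function.comp_apply, collapse]
  constructor
  · split_ifs with h
    · exact id
    · rintro rfl
      exact absurd hv hv₀
  · rintro rfl
    exact if_pos hv

lemma fiberSum_collapse_eq_collapseDeg_iff (hv₀ : v₀ ∉ U) {N : ℕ} {a : ι → ℕ}
    (ha : ∑ i, a i = N) {c : V → ℕ} :
    fiberSum (collapse U v₀ ∘ g) a = collapseDeg U v₀ N c ↔ ∀ v ∈ U, fiberSum g a v = c v := by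
  constructor
  · intro h v hv
    rw [← fiberSum_collapse_of_mem hv₀ a hv, h, collapseDeg, piecewise_eq_of_mem _ _ _ hv]
  · intro h
    have hU : ∀ v ∈ U, fiberSum (collapse U v₀ ∘ g) a v = c v := fun v hv =>
      (fiberSum_collapse_of_mem hv₀ a hv).trans (h v hv)
    have hmaps : ∀ i, (collapse U v₀ ∘ g) i ∈ insert v₀ U := fun i => by
      simp only [Function.comp_apply, collapse]
      split_ifs with hi
      exacts [mem_insert_of_mem hi, mem_insert_self v₀ U]
    have hzero : ∀ v ∉ insert v₀ U, fiberSum (collapse U v₀ ∘ g) a v = 0 := fun v hv =>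
      sum_eq_zero fun i hi => absurd ((mem_filter.mp hi).2 ▸ hmaps i) hv
    have htotal : fiberSum (collapse U v₀ ∘ g) a v₀ + ∑ v ∈ U, c v = N := by
      rw [← ha, ← sum_congr rfl hU, ← sum_insert hv₀]
      exact sum_fiberwise_of_maps_to (fun i _ => hmaps i) a
    ext v
    by_cases hv : v ∈ U
    · rw [hU v hv, collapseDeg, piecewise_eq_of_mem _ _ _ hv]
    rw [collapseDeg, piecewise_eq_of_notMem _ _ _ hv]
    obtain rfl | hvv := eq_or_ne v v₀
    · rw [Pi.single_eq_same]
      omega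
    · rw [Pi.single_eq_of_ne hvv, hzero v (by simp [hvv, hv])]

lemma prod_pow_fiberSum [Fintype V] (g : ι → V) (z : V → ℝ) (a : ι → ℕ) :
    ∏ v, z v ^ fiberSum g a v = ∏ i, z (g i) ^ a i := by
  rw [← prod_fiberwise univ g]
  refine prod_congr rfl fun v _ => ?_
  rw [fiberSum, ← prod_pow_eq_pow_sum]
  exact prod_congr rfl fun i hi => by rw [(mem_filter.mp hi).2]

end Collapse

section MarginSum

variable {ι E V : Type*} [Fintype ι] [DecidableEq ι] [Fintype E] [DecidableEq E] [Fintype V]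
  [DecidableEq V] {c : ι → E} {k : E → ℕ} {g : ι → V} {U : Finset V} {R : V → ℕ} {x : V → ℝ}
  {v₀ i : V}

/-- The assignments `a` with sum `k e` over each cell `c ⁻¹' {e}`. -/
def fiberTables (c : ι → E) (k : E → ℕ) : Finset (ι → ℕ) :=
  {a ∈ univ.piAntidiag (∑ e, k e) | fiberSum c a = k}

lemma mem_fiberTables {a : ι → ℕ} : a ∈ fiberTables c k ↔ fiberSum c a = k := by
  simp only [fiberTables, mem_filter, mem_piAntidiag, and_iff_right_iff_imp]
  rintro rfl
  exact ⟨(sum_fiberSum c a).symm, fun _ _ => mem_univ _⟩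

lemma sum_eq_of_mem_fiberTables {a : ι → ℕ} (ha : a ∈ fiberTables c k) : ∑ i, a i = ∑ e, k e := by
  rw [← mem_fiberTables.mp ha, sum_fiberSum]

/-- The part of the load generating function `∑ ∏ v, x v ^ load v` of the `fiberTables`, the load
of `v` being the sum over `g ⁻¹' {v}`, where the loads on `U` are prescribed by `R`. -/
def marginSum (c : ι → E) (k : E → ℕ) (g : ι → V) (U : Finset V) (R : V → ℕ) (x : V → ℝ) : ℝ :=
  ∑ a ∈ fiberTables c k with ∀ v ∈ U, fiberSum g a v = R v, ∏ v, x v ^ fiberSum g a v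

lemma marginSum_nonneg (hx : ∀ v, 0 < x v) : 0 ≤ marginSum c k g U R x :=
  sum_nonneg fun _ _ => prod_nonneg fun v _ => pow_nonneg (hx v).le _

lemma marginSum_eq_zero (hR : ∑ e, k e < ∑ v ∈ U, R v) : marginSum c k g U R x = 0 := by
  refine sum_eq_zero fun a ha => absurd hR (not_lt.mpr ?_)
  obtain ⟨ha, haR⟩ := mem_filter.mp ha
  calc ∑ v ∈ U, R v = ∑ v ∈ U, fiberSum g a v := sum_congr rfl fun v hv => (haR v hv).symm
    _ ≤ ∑ v, fiberSum g a v := sum_le_sum_of_subset (subset_univ U)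
    _ = ∑ e, k e := by rw [sum_fiberSum, sum_eq_of_mem_fiberTables ha]

lemma tendsto_pushCoeff_penalty (hx : ∀ v, 0 < x v) (hv₀ : v₀ ∉ U) :
    Tendsto (fun s => pushCoeff univ (∑ e, k e) (penalty c k (fun i => log (x (g i))) s)
        (collapse U v₀ ∘ g) (collapseDeg U v₀ (∑ e, k e) R)) atTop
      (nhds (marginSum c k g U R x)) := by
  have hexp : ∀ a : ι → ℕ, exp (∑ i, (a i : ℝ) * log (x (g i))) = ∏ v, x v ^ fiberSum g a v := by
    intro a
    rw [prod_pow_fiberSum, exp_sum]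
    refine prod_congr rfl fun i _ => ?_
    rw [← log_pow, exp_log (pow_pos (hx _) _)]
  have hlim : marginSum c k g U R x = ∑ a ∈ univ.piAntidiag (∑ e, k e) with
      fiberSum (collapse U v₀ ∘ g) a = collapseDeg U v₀ (∑ e, k e) R,
      if fiberSum c a = k then exp (∑ i, (a i : ℝ) * log (x (g i))) else 0 := by
    rw [← sum_filter, marginSum, fiberTables, filter_filter, filter_filter]
    refine sum_congr (filter_congr fun a ha => ?_) fun a _ => (hexp a).symm
    rw [fiberSum_collapse_eq_collapseDeg_iff hv₀ (mem_piAntidiag.mp ha).1, and_comm]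
  rw [hlim]
  exact tendsto_finsetSum _ fun a _ => tendsto_penalty_atTop c k _ a

theorem marginSum_mul_marginSum_le (hg : g.Surjective) (hx : ∀ v, 0 < x v) (hU : U ≠ univ)
    (hi : i ∈ U) {a b : ℕ} (hab : a ≤ b) :
    marginSum c k g U (Function.update R i a) x *
        marginSum c k g U (Function.update R i (b + 1)) x ≤
      marginSum c k g U (Function.update R i (a + 1)) x *
        marginSum c k g U (Function.update R i b) x := by
  obtain rfl | hab := hab.eq_or_lt
  · rw [mul_comm]
  obtain hdeg | hdeg := lt_or_ge (∑ e, k e) (b + 1 + ∑ v ∈ U.erase i, R v)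
  · rw [← sdiff_singleton_eq_erase, ← sum_update_of_mem hi] at hdeg
    rw [marginSum_eq_zero hdeg, mul_zero]
    exact mul_nonneg (marginSum_nonneg hx) (marginSum_nonneg hx)
  obtain ⟨v₀, hv₀⟩ : ∃ v₀, v₀ ∉ U := by simpa [eq_univ_iff_forall] using hU
  obtain ⟨N, hN⟩ : ∃ N, ∑ e, k e = N + 2 := ⟨∑ e, k e - 2, by omega⟩
  have hlim := fun r => tendsto_pushCoeff_penalty (c := c) (k := k) (g := g)
    (R := Function.update R i r) hx hv₀
  refine le_of_tendsto_of_tendsto ((hlim a).mul (hlim (b + 1))) ((hlim (a + 1)).mul (hlim b)) ?_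
  filter_upwards [eventually_ge_atTop 0] with s hs
  have hf := (isLorentzianOn_penalty c k (fun j => log (x (g j))) hs N).pushforward
    (collapse U v₀ ∘ g)
  rw [image_collapse_comp hg hv₀] at hf
  rw [hN] at hdeg ⊢
  exact hf.mul_collapseDeg_update_le hv₀ hi R hab.le hdeg

end MarginSum

section GeometricRatio

variable {u : ℕ → ℝ} {d r : ℕ} {q ρ : ℝ}

lemma mul_pow_le_mul_pow_of_ratio_le (hρ : 0 < ρ) (hup : ∀ c, r ≤ c → u (c + 1) ≤ ρ * u c)
    (hdown : ∀ c, c < r → u c * ρ ≤ u (c + 1)) (c : ℕ) : u c * ρ ^ r ≤ u r * ρ ^ c := by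
  obtain h | h := le_total r c
  · induction c, h using Nat.le_induction with
    | base => exact le_rfl
    | succ c hc ih =>
      calc u (c + 1) * ρ ^ r ≤ ρ * u c * ρ ^ r :=
            mul_le_mul_of_nonneg_right (hup c hc) (by positivity)
        _ = ρ * (u c * ρ ^ r) := by ring
        _ ≤ ρ * (u r * ρ ^ c) := mul_le_mul_of_nonneg_left ih hρ.le
        _ = u r * ρ ^ (c + 1) := by ring
  · induction h using Nat.decreasingInduction with
    | self => exact le_rfl
    | of_succ c hc ih =>
      refine le_of_mul_le_mul_left ?_ hρ
      calc ρ * (u c * ρ ^ r) = u c * ρ * ρ ^ r := by ring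
        _ ≤ u (c + 1) * ρ ^ r := mul_le_mul_of_nonneg_right (hdown c hc) (by positivity)
        _ ≤ u r * ρ ^ (c + 1) := ih
        _ = ρ * (u r * ρ ^ c) := by ring

lemma exists_geometric_majorant (hnn : ∀ c, 0 ≤ u c)
    (hlc : ∀ a b, a ≤ b → u a * u (b + 1) ≤ u (a + 1) * u b) (hur : 0 < u r) :
    ∃ ρ, 0 < ρ ∧ ∀ c, u c * ρ ^ r ≤ u r * ρ ^ c := by
  obtain h | h := (hnn (r + 1)).eq_or_lt
  · -- The sequence vanishes beyond `r`, so only the ratios below `r` constrain `ρ`.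
    have hp : 0 < u (r - 1) + 1 := add_pos_of_nonneg_of_pos (hnn _) one_pos
    have hρ : 0 < u r / (u (r - 1) + 1) := div_pos hur hp
    refine ⟨_, hρ, mul_pow_le_mul_pow_of_ratio_le hρ (fun c hc => ?_) fun c hc => ?_⟩
    · have hz := hlc r c hc
      rw [← h, zero_mul] at hz
      exact (nonpos_of_mul_nonpos_right hz hur).trans (mul_nonneg hρ.le (hnn c))
    · have hle := hlc c (r - 1) (by omega)
      rw [Nat.sub_add_cancel (by omega)] at hle
      rw [← mul_div_assoc, div_le_iff₀ hp]
      linarith [hnn (c + 1)]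
  · have hρ : 0 < u (r + 1) / u r := div_pos h hur
    refine ⟨_, hρ, mul_pow_le_mul_pow_of_ratio_le hρ (fun c hc => ?_) fun c hc => ?_⟩
    · rw [div_mul_eq_mul_div, le_div_iff₀ hur]
      linarith [hlc r c hc]
    · rw [← mul_div_assoc, div_le_iff₀ hur]
      exact hlc c r hc.le

/-- The quotient of the geometric sum `1 + q + ⋯ + q ^ d` by its `r`-th term: the cost of
extracting the coefficient `r` from a polynomial of degree `d` with log-concave coefficients. -/
def geomRatio (d r : ℕ) (q : ℝ) : ℝ := (∑ c ∈ range (d + 1), q ^ c) / q ^ r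

lemma geomRatio_nonneg (hq : 0 < q) : 0 ≤ geomRatio d r q := by
  unfold geomRatio
  positivity

lemma exists_sum_mul_pow_le_geomRatio_mul (hnn : ∀ c, 0 ≤ u c)
    (hlc : ∀ a b, a ≤ b → u a * u (b + 1) ≤ u (a + 1) * u b) (hur : 0 < u r) (d : ℕ)
    (hq : 0 < q) :
    ∃ t, 0 < t ∧ ∑ c ∈ range (d + 1), u c * t ^ c ≤ geomRatio d r q * (u r * t ^ r) := by
  obtain ⟨ρ, hρ, hmaj⟩ := exists_geometric_majorant hnn hlc hur
  refine ⟨q / ρ, div_pos hq hρ, ?_⟩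
  have hterm : ∀ c, u c * (q / ρ) ^ c ≤ q ^ c * (u r / ρ ^ r) := fun c => by
    rw [div_pow, ← mul_div_assoc, ← mul_div_assoc, div_le_div_iff₀ (by positivity) (by positivity)]
    calc u c * q ^ c * ρ ^ r = q ^ c * (u c * ρ ^ r) := by ring
      _ ≤ q ^ c * (u r * ρ ^ c) := mul_le_mul_of_nonneg_left (hmaj c) (by positivity)
      _ = q ^ c * u r * ρ ^ c := by ring
  calc ∑ c ∈ range (d + 1), u c * (q / ρ) ^ c
      ≤ ∑ c ∈ range (d + 1), q ^ c * (u r / ρ ^ r) := sum_le_sum fun c _ => hterm c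
    _ = geomRatio d r q * (u r * (q / ρ) ^ r) := by
      rw [← sum_mul, geomRatio, div_pow]
      field_simp

lemma geomRatio_inv (hr : r ≤ d) (hq : 0 < q) : geomRatio d r q⁻¹ = geomRatio d (d - r) q := by
  have hsum : ∑ c ∈ range (d + 1), q⁻¹ ^ c = (∑ c ∈ range (d + 1), q ^ c) / q ^ d := by
    rw [← sum_range_reflect, sum_div]
    refine sum_congr rfl fun c hc => ?_
    have hc : c ≤ d := Nat.lt_succ_iff.mp (mem_range.mp hc)
    rw [Nat.add_sub_cancel, inv_pow, pow_sub₀ _ hq.ne' hc]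
    field_simp
  rw [geomRatio, geomRatio, hsum, pow_sub₀ _ hq.ne' hr, inv_pow]
  field_simp

lemma geomRatio_le (d r : ℕ) (hq : 0 < q) (hq1 : q < 1) :
    geomRatio d r q ≤ ((1 - q) * q ^ r)⁻¹ := by
  have h1q : 0 < 1 - q := sub_pos.mpr hq1
  have hsum : ∑ c ∈ range (d + 1), q ^ c ≤ (1 - q)⁻¹ := by
    rw [← one_div, le_div_iff₀ h1q, geom_sum_mul_neg]
    linarith [pow_pos hq (d + 1)]
  rw [geomRatio, mul_inv, ← div_eq_mul_inv]
  exact div_le_div_of_nonneg_right hsum (pow_pos hq r).le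

lemma exists_geomRatio_le (hr : r ≤ d) (hq : 0 < q) (hq1 : q < 1) :
    ∃ p, 0 < p ∧ geomRatio d r p ≤ ((1 - q) * q ^ min r (d - r))⁻¹ := by
  obtain h | h := le_total r (d - r)
  · rw [min_eq_left h]
    exact ⟨q, hq, geomRatio_le d r hq hq1⟩
  · rw [min_eq_right h]
    exact ⟨q⁻¹, inv_pos.mpr hq, geomRatio_inv hr hq ▸ geomRatio_le d (d - r) hq hq1⟩

lemma inv_one_sub_mul_pow_le {s : ℕ} (hs : 0 < s) :
    ((1 - (s / (s + 1) : ℝ)) * (s / (s + 1)) ^ s)⁻¹ ≤ exp 1 * (s + 1) := by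
  have hs' : (0 : ℝ) < s := Nat.cast_pos.mpr hs
  have hpow : (((s : ℝ) + 1) / s) ^ s ≤ exp 1 :=
    calc (((s : ℝ) + 1) / s) ^ s = (1 / s + 1) ^ s := by rw [add_div, div_self hs'.ne', add_comm]
      _ ≤ exp (1 / s) ^ s := pow_le_pow_left₀ (by positivity) (add_one_le_exp _) s
      _ = exp 1 := by rw [← exp_nat_mul, mul_one_div_cancel hs'.ne']
  have hinv : (1 - (s / (s + 1) : ℝ))⁻¹ = s + 1 := by
    rw [one_sub_div (by positivity), add_sub_cancel_left, one_div, inv_inv]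
  rw [mul_inv, hinv, ← inv_pow, inv_div, mul_comm]
  exact mul_le_mul_of_nonneg_right hpow (by positivity)

lemma exists_five_mul_inv_one_sub_mul_pow_sq_le (s : ℕ) : ∃ q : ℝ, 0 < q ∧ q < 1 ∧
    5 * ((1 - q) * q ^ s)⁻¹ ^ 2 ≤ 4 * (exp 1 ^ 2 * (max 1 (s : ℝ) * (1 + 2 * s))) := by
  have he : 7 ≤ exp 2 := by
    have hsq : exp 1 ^ 2 = exp 2 := mod_cast exp_one_pow 2
    nlinarith [exp_one_gt_d9]
  obtain hs | hs := lt_or_ge s 3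
  · interval_cases s
    · exact ⟨1 / 2, by norm_num, by norm_num, by norm_num; linarith⟩
    · exact ⟨1 / 2, by norm_num, by norm_num, by norm_num; linarith⟩
    · exact ⟨2 / 3, by norm_num, by norm_num, by norm_num; linarith⟩
  · have hs3 : (3 : ℝ) ≤ s := by exact_mod_cast hs
    have hq1 : (s / (s + 1) : ℝ) < 1 := (div_lt_one (by positivity)).mpr (lt_add_one _)
    refine ⟨s / (s + 1), by positivity, hq1, ?_⟩
    have hnonneg : 0 ≤ ((1 - (s / (s + 1) : ℝ)) * (s / (s + 1)) ^ s)⁻¹ :=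
      inv_nonneg.mpr (mul_nonneg (sub_nonneg.mpr hq1.le) (by positivity))
    rw [max_eq_right (by linarith)]
    calc 5 * ((1 - (s / (s + 1) : ℝ)) * (s / (s + 1)) ^ s)⁻¹ ^ 2
        ≤ 5 * (exp 1 * (s + 1)) ^ 2 := by
          gcongr
          exact inv_one_sub_mul_pow_le (by omega)
      _ = exp 1 ^ 2 * (5 * (s + 1) ^ 2) := by ring
      _ ≤ exp 1 ^ 2 * (4 * (s * (1 + 2 * s))) :=
          mul_le_mul_of_nonneg_left (by nlinarith) (sq_nonneg _)
      _ = 4 * (exp 1 ^ 2 * (s * (1 + 2 * s))) := by ring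

lemma exists_five_mul_geomRatio_sq_le (hr : 0 < r) (hrd : r ≤ d) :
    ∃ q, 0 < q ∧ 5 * geomRatio d r q ^ 2 ≤ 4 * (exp 1 ^ 2 * (r * (1 + d))) := by
  set s := min r (d - r)
  obtain ⟨q, hq, hq1, hbound⟩ := exists_five_mul_inv_one_sub_mul_pow_sq_le s
  obtain ⟨p, hp, hle⟩ := exists_geomRatio_le hrd hq hq1
  have hmax : max 1 (s : ℝ) ≤ r := max_le (by exact_mod_cast hr) (by exact_mod_cast min_le_left _ _)
  have hs : 2 * (s : ℝ) ≤ d := by exact_mod_cast (by omega : 2 * s ≤ d)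
  refine ⟨p, hp, ?_⟩
  calc 5 * geomRatio d r p ^ 2 ≤ 5 * ((1 - q) * q ^ s)⁻¹ ^ 2 := by
        gcongr
        exact geomRatio_nonneg hp
    _ ≤ 4 * (exp 1 ^ 2 * (max 1 (s : ℝ) * (1 + 2 * s))) := hbound
    _ ≤ 4 * (exp 1 ^ 2 * (r * (1 + d))) := by gcongr

lemma exists_sum_mul_prod_erase_sq_le {V : Type*} [Fintype V] [DecidableEq V] {W : Finset V}
    (hW : W.Nonempty) {κ E : V → ℝ} (hκ : ∀ v, 5 * κ v ^ 2 ≤ 4 * E v) :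
    ∃ v₀, (∑ v ∈ W, E v) * (∏ v ∈ univ.erase v₀, κ v) ^ 2 ≤ 4 * ∏ v, E v := by
  obtain ⟨v₀, -, hmax⟩ := W.exists_max_image E hW
  have hE : ∀ v, 0 ≤ E v := fun v => by nlinarith [hκ v, sq_nonneg (κ v)]
  set ℓ := #(univ.erase v₀) with hℓ
  have hcard : #W ≤ ℓ + 1 := by
    rw [card_erase_add_one (mem_univ v₀)]
    exact card_le_univ W
  have hsum : ∑ v ∈ W, E v ≤ 4 * (5 / 4) ^ ℓ * E v₀ :=
    calc ∑ v ∈ W, E v ≤ #W * E v₀ := by simpa using sum_le_card_nsmul W E _ hmax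
      _ ≤ 4 * (5 / 4) ^ ℓ * E v₀ := by
        have hbernoulli := one_add_mul_le_pow (a := (1 / 4 : ℝ)) (by norm_num) ℓ
        have hcard' : (#W : ℝ) ≤ ℓ + 1 := by exact_mod_cast hcard
        gcongr
        · exact hE v₀
        · norm_num at hbernoulli
          linarith
  have hprod : (5 / 4) ^ ℓ * (∏ v ∈ univ.erase v₀, κ v) ^ 2 ≤ ∏ v ∈ univ.erase v₀, E v := by
    rw [← prod_pow, hℓ, ← prod_const, ← prod_mul_distrib]
    exact prod_le_prod (fun v _ => by positivity) fun v _ => by linarith [hκ v]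
  refine ⟨v₀, ?_⟩
  calc (∑ v ∈ W, E v) * (∏ v ∈ univ.erase v₀, κ v) ^ 2
      ≤ 4 * (5 / 4) ^ ℓ * E v₀ * (∏ v ∈ univ.erase v₀, κ v) ^ 2 := by gcongr
    _ = 4 * E v₀ * ((5 / 4) ^ ℓ * (∏ v ∈ univ.erase v₀, κ v) ^ 2) := by ring
    _ ≤ 4 * E v₀ * ∏ v ∈ univ.erase v₀, E v :=
      mul_le_mul_of_nonneg_left hprod (mul_nonneg (by norm_num) (hE v₀))
    _ = 4 * ∏ v, E v := by rw [mul_assoc, mul_prod_erase _ _ (mem_univ v₀)]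

end GeometricRatio

section Elimination

variable {ι E V : Type*} [Fintype ι] [DecidableEq ι] [Fintype E] [DecidableEq E]
  [DecidableEq V] {c : ι → E} {k : E → ℕ} {g : ι → V} {U : Finset V} {R : V → ℕ} {x : V → ℝ}
  {a : ι → ℕ} {i : V}

lemma fiberSum_le_of_mem_fiberTables (ha : a ∈ fiberTables c k) (v : V) :
    fiberSum g a v ≤ fiberSum g (k ∘ c) v := by
  refine sum_le_sum fun j _ => ?_
  rw [Function.comp_apply, ← mem_fiberTables.mp ha]
  exact single_le_sum_of_canonicallyOrdered (mem_filter.mpr ⟨mem_univ j, rfl⟩)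

lemma mulSingle_mul_pos {t : ℝ} (ht : 0 < t) (hx : ∀ v, 0 < x v) (v : V) :
    0 < (Pi.mulSingle i t * x : V → ℝ) v := by
  rw [Pi.mul_apply, Pi.mulSingle_apply]
  split_ifs
  exacts [mul_pos ht (hx v), mul_pos one_pos (hx v)]

variable [Fintype V]

lemma marginSum_pos (hx : ∀ v, 0 < x v) (ha : a ∈ fiberTables c k) (haR : fiberSum g a = R) :
    0 < marginSum c k g U R x :=
  sum_pos (fun _ _ => prod_pos fun v _ => pow_pos (hx v) _)
    ⟨a, mem_filter.mpr ⟨ha, fun v _ => congrFun haR v⟩⟩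

lemma marginSum_eq_sum_update (hi : i ∉ U) :
    marginSum c k g U R x = ∑ r ∈ range (fiberSum g (k ∘ c) i + 1),
      marginSum c k g (insert i U) (Function.update R i r) x := by
  have hmaps : ∀ a ∈ ({a ∈ fiberTables c k | ∀ v ∈ U, fiberSum g a v = R v} : Finset (ι → ℕ)),
      fiberSum g a i ∈ range (fiberSum g (k ∘ c) i + 1) := fun a ha =>
    mem_range_succ_iff.mpr (fiberSum_le_of_mem_fiberTables (mem_filter.mp ha).1 i)
  rw [marginSum, ← sum_fiberwise_of_maps_to hmaps]
  refine sum_congr rfl fun r _ => ?_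
  rw [marginSum, filter_filter]
  refine sum_congr (filter_congr fun a _ => ?_) fun _ _ => rfl
  rw [forall_mem_insert, Function.update_self, and_comm]
  refine and_congr_right fun _ => forall₂_congr fun v hv => ?_
  rw [Function.update_of_ne (ne_of_mem_of_not_mem hv hi)]

lemma prod_mulSingle_mul_pow (i : V) (t : ℝ) (x : V → ℝ) (e : V → ℕ) :
    ∏ v, (Pi.mulSingle i t * x : V → ℝ) v ^ e v = t ^ e i * ∏ v, x v ^ e v := by
  simp only [Pi.mul_apply, mul_pow, prod_mul_distrib, Pi.mulSingle_apply, ite_pow, one_pow,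
    prod_ite_eq', mem_univ, if_true]

lemma marginSum_mulSingle_mul (hi : i ∈ U) (t : ℝ) :
    marginSum c k g U R (Pi.mulSingle i t * x) = t ^ R i * marginSum c k g U R x := by
  rw [marginSum, marginSum, mul_sum]
  refine sum_congr rfl fun a ha => ?_
  rw [prod_mulSingle_mul_pow, (mem_filter.mp ha).2 i hi]

lemma exists_marginSum_mulSingle_mul_le (hg : g.Surjective) (hx : ∀ v, 0 < x v) (hi : i ∉ U)
    (hU : insert i U ≠ univ) (ha : a ∈ fiberTables c k) (haR : fiberSum g a = R) {q : ℝ}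
    (hq : 0 < q) :
    ∃ t, 0 < t ∧ marginSum c k g U R (Pi.mulSingle i t * x) ≤
      t ^ R i * (geomRatio (fiberSum g (k ∘ c) i) (R i) q * marginSum c k g (insert i U) R x) := by
  set u : ℕ → ℝ := fun r => marginSum c k g (insert i U) (Function.update R i r) x
  have huR : u (R i) = marginSum c k g (insert i U) R x := by simp only [u, Function.update_eq_self]
  obtain ⟨t, ht, hle⟩ := exists_sum_mul_pow_le_geomRatio_mul (u := u) (r := R i)
    (fun _ => marginSum_nonneg hx)
    (fun _ _ hab => marginSum_mul_marginSum_le hg hx hU (mem_insert_self i U) hab)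
    (huR ▸ marginSum_pos hx ha haR) (fiberSum g (k ∘ c) i) hq
  refine ⟨t, ht, ?_⟩
  calc marginSum c k g U R (Pi.mulSingle i t * x)
      = ∑ r ∈ range (fiberSum g (k ∘ c) i + 1), u r * t ^ r := by
        rw [marginSum_eq_sum_update hi]
        refine sum_congr rfl fun r _ => ?_
        rw [marginSum_mulSingle_mul (mem_insert_self i U), Function.update_self, mul_comm]
    _ ≤ geomRatio (fiberSum g (k ∘ c) i) (R i) q * (u (R i) * t ^ R i) := hle
    _ = t ^ R i * (geomRatio (fiberSum g (k ∘ c) i) (R i) q *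
          marginSum c k g (insert i U) R x) := by rw [huR]; ring

variable {B : ℝ} {q : V → ℝ}

lemma mul_prod_pow_le_prod_geomRatio_mul_marginSum (hg : g.Surjective)
    (ha : a ∈ fiberTables c k) (haR : fiberSum g a = R) (hq : ∀ v, 0 < q v)
    (hB : ∀ x, (∀ v, 0 < x v) → B * ∏ v, x v ^ R v ≤ marginSum c k g ∅ R x) (hU : U ≠ univ)
    (hx : ∀ v, 0 < x v) :
    B * ∏ v, x v ^ R v ≤
      (∏ v ∈ U, geomRatio (fiberSum g (k ∘ c) v) (R v) (q v)) * marginSum c k g U R x := by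
  induction U using Finset.induction_on generalizing x with
  | empty => simpa using hB x hx
  | insert i U hi ih =>
    have hU' : U ≠ univ := fun h => hi (h ▸ mem_univ i)
    obtain ⟨t, ht, hle⟩ := exists_marginSum_mulSingle_mul_le hg hx hi hU ha haR (hq i)
    have hκ : 0 ≤ ∏ v ∈ U, geomRatio (fiberSum g (k ∘ c) v) (R v) (q v) :=
      prod_nonneg fun v _ => geomRatio_nonneg (hq v)
    refine le_of_mul_le_mul_left ?_ (pow_pos ht (R i))
    calc t ^ R i * (B * ∏ v, x v ^ R v) = B * ∏ v, (Pi.mulSingle i t * x : V → ℝ) v ^ R v := by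
          rw [prod_mulSingle_mul_pow, mul_left_comm]
      _ ≤ _ := ih hU' (mulSingle_mul_pos ht hx)
      _ ≤ _ := mul_le_mul_of_nonneg_left hle hκ
      _ = _ := by rw [prod_insert hi]; ring

lemma marginSum_erase_one (hR : ∑ v, R v = ∑ e, k e) (v₀ : V) :
    marginSum c k g (univ.erase v₀) R 1 = #{a ∈ fiberTables c k | fiberSum g a = R} := by
  simp only [marginSum, Pi.one_apply, one_pow, prod_const_one, sum_const, nsmul_one]
  congr 2
  refine filter_congr fun a ha => ⟨fun h => ?_, fun h v _ => congrFun h v⟩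
  have htotal : ∑ v, fiberSum g a v = ∑ v, R v := by
    rw [hR, sum_fiberSum, sum_eq_of_mem_fiberTables ha]
  rw [← add_sum_erase _ _ (mem_univ v₀), ← add_sum_erase _ R (mem_univ v₀), sum_congr rfl h,
    Nat.add_right_cancel_iff] at htotal
  ext v
  obtain rfl | hv := eq_or_ne v v₀
  exacts [htotal, h v (mem_erase.mpr ⟨hv, mem_univ v⟩)]

/-- A Gurvits-type capacity bound. -/
theorem le_prod_geomRatio_mul_card (hg : g.Surjective) (ha : a ∈ fiberTables c k)
    (haR : fiberSum g a = R) (hq : ∀ v, 0 < q v)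
    (hB : ∀ x, (∀ v, 0 < x v) → B * ∏ v, x v ^ R v ≤ marginSum c k g ∅ R x) (v₀ : V) :
    B ≤ (∏ v ∈ univ.erase v₀, geomRatio (fiberSum g (k ∘ c) v) (R v) (q v)) *
      #{a ∈ fiberTables c k | fiberSum g a = R} := by
  have hR : ∑ v, R v = ∑ e, k e := by rw [← haR, sum_fiberSum, sum_eq_of_mem_fiberTables ha]
  have h := mul_prod_pow_le_prod_geomRatio_mul_marginSum hg ha haR hq hB
    (erase_ne_self.mpr (mem_univ v₀)) (x := 1) fun _ => one_pos
  simpa only [Pi.one_apply, one_pow, prod_const_one, mul_one, marginSum_erase_one hR] using h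

end Elimination

section BoundedTables

variable {Z I J : Type*}

/-- The entries of `A` together with their complements in `K`. In this encoding the cells
`Prod.fst` turn the constraint `A ≤ K` into prescribed cell sums. -/
def withCompl (K A : Z → ℕ) (p : Z × Bool) : ℕ := if p.2 then K p.1 - A p.1 else A p.1

/-- The line of the grid `I × J` to which an entry or its complement contributes: entries
(`false`) to their row, complements (`true`) to their column. -/
def gridVertex (p : (I × J) × Bool) : I ⊕ J := if p.2 then .inr p.1.2 else .inl p.1.1

/-- The load of each line of `I × J` in a table with margins `R`, `C` and bounds `K`: a column
carries the complements of its entries, hence the load `∑ i, K i j - C j`. -/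
def lineLoad [Fintype I] (K : I → J → ℕ) (R : I → ℕ) (C : J → ℕ) : I ⊕ J → ℕ :=
  Sum.elim R fun j => ∑ i, K i j - C j

/-- The row and column sums of `K`: the largest possible load of each line. -/
def lineBound [Fintype I] [Fintype J] (K : I → J → ℕ) : I ⊕ J → ℕ :=
  Sum.elim (fun i => ∑ j, K i j) fun j => ∑ i, K i j

lemma gridVertex_surjective [Nonempty I] [Nonempty J] :
    (gridVertex : (I × J) × Bool → I ⊕ J).Surjective := by
  rintro (i | j)
  · exact ⟨((i, Classical.arbitrary J), false), rfl⟩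
  · exact ⟨((Classical.arbitrary I, j), true), rfl⟩

section Cells

variable [Fintype Z] [DecidableEq Z] {K A : Z → ℕ} {a : Z × Bool → ℕ}

lemma fiberSum_fst (a : Z × Bool → ℕ) (z : Z) :
    fiberSum Prod.fst a z = a (z, true) + a (z, false) := by
  simp [fiberSum, sum_filter, Fintype.sum_prod_type, sum_add_distrib]

lemma withCompl_mem_fiberTables (hA : A ≤ K) : withCompl K A ∈ fiberTables Prod.fst K :=
  mem_fiberTables.mpr <| funext fun z => (fiberSum_fst _ z).trans (Nat.sub_add_cancel (hA z))

lemma le_of_mem_fiberTables_fst (ha : a ∈ fiberTables Prod.fst K) :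
    (fun z => a (z, false)) ≤ K := fun z => by
  rw [← mem_fiberTables.mp ha, fiberSum_fst]
  exact Nat.le_add_left _ _

lemma withCompl_of_mem_fiberTables_fst (ha : a ∈ fiberTables Prod.fst K) :
    withCompl K (fun z => a (z, false)) = a := by
  ext ⟨z, b⟩
  rw [withCompl, ← mem_fiberTables.mp ha, fiberSum_fst]
  cases b <;> simp

lemma sum_fiberTables_fst {M : Type*} [AddCommMonoid M] (K : Z → ℕ) (F : (Z × Bool → ℕ) → M) :
    ∑ a ∈ fiberTables Prod.fst K, F a =
      ∑ A ∈ Fintype.piFinset fun z => range (K z + 1), F (withCompl K A) := by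
  refine sum_nbij' (fun a z => a (z, false)) (withCompl K) (fun a ha => ?_) (fun A hA => ?_)
    (fun a ha => withCompl_of_mem_fiberTables_fst ha) (fun A _ => rfl)
    fun a ha => by rw [withCompl_of_mem_fiberTables_fst ha]
  · exact Fintype.mem_piFinset.mpr fun z =>
      mem_range_succ_iff.mpr (le_of_mem_fiberTables_fst ha z)
  · exact withCompl_mem_fiberTables fun z =>
      mem_range_succ_iff.mp (Fintype.mem_piFinset.mp hA z)

end Cells

section Grid

variable [Fintype I] [DecidableEq I] [Fintype J] [DecidableEq J] {K : I → J → ℕ} {R : I → ℕ}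
  {C : J → ℕ}

lemma fiberSum_gridVertex (a : (I × J) × Bool → ℕ) :
    fiberSum gridVertex a =
      Sum.elim (fun i => ∑ j, a ((i, j), false)) (fun j => ∑ i, a ((i, j), true)) := by
  ext v
  rw [fiberSum, sum_filter, Fintype.sum_prod_type, Fintype.sum_prod_type]
  obtain i | j := v <;> simp [gridVertex]

lemma fiberSum_gridVertex_withCompl_eq_iff (hC : ∀ j, C j ≤ ∑ i, K i j) {A : I → J → ℕ}
    (hA : ∀ i j, A i j ≤ K i j) :
    fiberSum gridVertex (withCompl K.uncurry A.uncurry) = lineLoad K R C ↔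
      (∀ i, ∑ j, A i j = R i) ∧ ∀ j, ∑ i, A i j = C j := by
  simp only [fiberSum_gridVertex, lineLoad, funext_iff, Sum.forall, Sum.elim_inl, Sum.elim_inr,
    withCompl, Bool.false_eq_true, if_false, if_true, Function.uncurry_apply_pair]
  refine and_congr_right fun _ => forall_congr' fun j => ?_
  have hle : ∑ i, A i j ≤ ∑ i, K i j := sum_le_sum fun i _ => hA i j
  have := hC j
  rw [sum_tsub_distrib _ fun i _ => hA i j]
  omega

lemma tableCount_eq_card (hC : ∀ j, C j ≤ ∑ i, K i j) :
    tableCount (fun i j => (K i j : ℕ∞)) R C = #{a ∈ fiberTables Prod.fst K.uncurry |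
      fiberSum gridVertex a = lineLoad K R C} := by
  rw [tableCount, ← Set.ncard_coe_finset]
  simp only [Nat.cast_le]
  refine Set.BijOn.ncard_eq (f := fun A => withCompl K.uncurry A.uncurry) ⟨?_, ?_, ?_⟩
  · rintro A ⟨hrow, hcol, hA⟩
    exact mem_coe.mpr <| mem_filter.mpr ⟨withCompl_mem_fiberTables fun z => hA z.1 z.2,
      (fiberSum_gridVertex_withCompl_eq_iff hC hA).mpr ⟨hrow, hcol⟩⟩
  · intro A _ B _ h
    ext i j
    exact congrFun h ((i, j), false)
  · intro a ha
    obtain ⟨ha, hload⟩ := mem_filter.mp (mem_coe.mp ha)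
    have hA := fun i j => le_of_mem_fiberTables_fst ha (i, j)
    have heq := withCompl_of_mem_fiberTables_fst ha
    rw [← heq] at hload
    obtain ⟨hrow, hcol⟩ := (fiberSum_gridVertex_withCompl_eq_iff hC hA).mp hload
    exact ⟨fun i j => a ((i, j), false), ⟨hrow, hcol, hA⟩, heq⟩

end Grid

end BoundedTables

section Capacity

variable {m n : ℕ} {K : Fin m → Fin n → ℕ} {R : Fin m → ℕ} {C : Fin n → ℕ} {x : Fin m → ℝ}
  {y : Fin n → ℝ}

/-- The infimum of `G(x,y) / (x^R y^C)` over the positive orthant. -/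
def capacity (K : Fin m → Fin n → ℕ) (R : Fin m → ℕ) (C : Fin n → ℕ) : ℝ :=
  sInf {v : ℝ | ∃ (x : Fin m → ℝ) (y : Fin n → ℝ), (∀ i, 0 < x i) ∧ (∀ j, 0 < y j) ∧
    v = genFun K x y / (monom x R * monom y C)}

lemma monom_pos (hx : ∀ i, 0 < x i) (R : Fin m → ℕ) : 0 < monom x R :=
  prod_pos fun i _ => pow_pos (hx i) _

lemma genFun_pos (hx : ∀ i, 0 < x i) (hy : ∀ j, 0 < y j) : 0 < genFun K x y :=
  prod_pos fun i _ => prod_pos fun j _ =>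
    sum_pos (fun _ _ => pow_pos (mul_pos (hx i) (hy j)) _) nonempty_range_add_one

lemma marginSum_empty_gridVertex (S : Fin m ⊕ Fin n → ℕ) (x : Fin m → ℝ) (hy : ∀ j, 0 < y j) :
    marginSum Prod.fst K.uncurry gridVertex ∅ S (Sum.elim x y⁻¹) =
      genFun K x y * monom y⁻¹ (fun j => ∑ i, K i j) := by
  have hcell : ∀ i j, ∑ t ∈ range (K i j + 1), x i ^ t * (y j)⁻¹ ^ (K i j - t) =
      (∑ t ∈ range (K i j + 1), (x i * y j) ^ t) * (y j)⁻¹ ^ K i j := fun i j => by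
    rw [sum_mul]
    refine sum_congr rfl fun t ht => ?_
    rw [pow_sub₀ _ (inv_ne_zero (hy j).ne') (mem_range_succ_iff.mp ht), mul_pow, inv_pow, inv_pow,
      inv_inv]
    ring
  have hmonom : monom y⁻¹ (fun j => ∑ i, K i j) = ∏ i, ∏ j, (y j)⁻¹ ^ K i j := by
    rw [Finset.prod_comm]
    exact prod_congr rfl fun j _ => (prod_pow_eq_pow_sum _ _ _).symm
  have hcoeff : marginSum Prod.fst K.uncurry gridVertex ∅ S (Sum.elim x y⁻¹) =
      ∑ a ∈ fiberTables Prod.fst K.uncurry,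
        ∏ p : (Fin m × Fin n) × Bool, Sum.elim x y⁻¹ (gridVertex p) ^ a p := by
    simp only [marginSum, notMem_empty, false_imp_iff, implies_true, filter_true,
      prod_pow_fiberSum]
  rw [hcoeff, sum_fiberTables_fst, genFun, hmonom]
  simp only [← prod_mul_distrib, ← hcell, ← Fintype.prod_prod_type']
  rw [prod_univ_sum]
  refine sum_congr rfl fun A _ => ?_
  simp [Fintype.prod_prod_type, gridVertex, withCompl, mul_comm]

lemma marginSum_empty_eq_ratio_mul_prod (hC : ∀ j, C j ≤ ∑ i, K i j) (hx : ∀ i, 0 < x i)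
    (hy : ∀ j, 0 < y j) :
    marginSum Prod.fst K.uncurry gridVertex ∅ (lineLoad K R C) (Sum.elim x y⁻¹) =
      genFun K x y / (monom x R * monom y C) *
        ∏ v, Sum.elim x y⁻¹ v ^ lineLoad K R C v := by
  have hsplit : monom y⁻¹ (fun j => ∑ i, K i j) =
      monom y⁻¹ (fun j => ∑ i, K i j - C j) / monom y C := by
    rw [monom, monom, monom, ← prod_div_distrib]
    refine prod_congr rfl fun j _ => ?_
    have hy' := (hy j).ne'
    rw [Pi.inv_apply, pow_sub₀ _ (inv_ne_zero hy') (hC j), inv_pow _ (C j), inv_inv,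
      mul_div_cancel_right₀ _ (pow_ne_zero _ hy')]
  rw [marginSum_empty_gridVertex _ _ hy, hsplit, Fintype.prod_sum_type]
  simp only [lineLoad, Sum.elim_inl, Sum.elim_inr]
  rw [← monom, ← monom]
  have := (monom_pos hx R).ne'
  have := (monom_pos hy C).ne'
  field_simp

lemma tableCount_le_genFun_div (hC : ∀ j, C j ≤ ∑ i, K i j) (hx : ∀ i, 0 < x i)
    (hy : ∀ j, 0 < y j) :
    (tableCount (fun i j => (K i j : ℕ∞)) R C : ℝ) ≤ genFun K x y / (monom x R * monom y C) := by
  set S : Fin m ⊕ Fin n → ℕ := lineLoad K R C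
  set z : Fin m ⊕ Fin n → ℝ := Sum.elim x y⁻¹
  have hz : ∀ v, 0 < z v := Sum.forall.mpr ⟨hx, fun j => inv_pos.mpr (hy j)⟩
  refine le_of_mul_le_mul_right ?_ (prod_pos fun v (_ : v ∈ univ) => pow_pos (hz v) (S v))
  rw [tableCount_eq_card hC, ← marginSum_empty_eq_ratio_mul_prod hC hx hy, ← nsmul_eq_mul,
    ← sum_const]
  calc ∑ a ∈ fiberTables Prod.fst K.uncurry with fiberSum gridVertex a = S, ∏ v, z v ^ S v
      = ∑ a ∈ fiberTables Prod.fst K.uncurry with fiberSum gridVertex a = S,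
          ∏ v, z v ^ fiberSum gridVertex a v :=
        sum_congr rfl fun a ha => by rw [(mem_filter.mp ha).2]
    _ ≤ marginSum Prod.fst K.uncurry gridVertex ∅ S z :=
        sum_le_sum_of_subset_of_nonneg (monotone_filter_right _ fun a _ _ v hv => by simp at hv)
          fun a _ _ => prod_nonneg fun v _ => pow_nonneg (hz v).le _

lemma tableCount_le_capacity (hC : ∀ j, C j ≤ ∑ i, K i j) :
    (tableCount (fun i j => (K i j : ℕ∞)) R C : ℝ) ≤ capacity K R C :=
  le_csInf ⟨_, 1, 1, fun _ => one_pos, fun _ => one_pos, rfl⟩ <| by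
    rintro _ ⟨x, y, hx, hy, rfl⟩
    exact tableCount_le_genFun_div hC hx hy

lemma capacity_le (hx : ∀ i, 0 < x i) (hy : ∀ j, 0 < y j) :
    capacity K R C ≤ genFun K x y / (monom x R * monom y C) := by
  refine csInf_le ⟨0, ?_⟩ ⟨x, y, hx, hy, rfl⟩
  rintro _ ⟨x, y, hx, hy, rfl⟩
  exact (div_pos (genFun_pos hx hy) (mul_pos (monom_pos hx R) (monom_pos hy C))).le

lemma capacity_mul_prod_le_marginSum (hC : ∀ j, C j ≤ ∑ i, K i j) {z : Fin m ⊕ Fin n → ℝ}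
    (hz : ∀ v, 0 < z v) :
    capacity K R C * ∏ v, z v ^ lineLoad K R C v ≤
      marginSum Prod.fst K.uncurry gridVertex ∅ (lineLoad K R C) z := by
  have hx : ∀ i, 0 < (z ∘ Sum.inl) i := fun i => hz _
  have hy : ∀ j, 0 < (z ∘ Sum.inr)⁻¹ j := fun j => inv_pos.mpr (hz _)
  have h := marginSum_empty_eq_ratio_mul_prod (R := R) hC hx hy
  rw [inv_inv, Sum.elim_comp_inl_inr] at h
  rw [h]
  exact mul_le_mul_of_nonneg_right (capacity_le hx hy)
    (prod_nonneg fun v _ => pow_nonneg (hz v).le _)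

lemma capacity_le_prod_geomRatio_mul_tableCount [Nonempty (Fin m)] [Nonempty (Fin n)]
    (hC : ∀ j, C j ≤ ∑ i, K i j) (hT : 0 < tableCount (fun i j => (K i j : ℕ∞)) R C)
    {q : Fin m ⊕ Fin n → ℝ} (hq : ∀ v, 0 < q v) (v₀ : Fin m ⊕ Fin n) :
    capacity K R C ≤ (∏ v ∈ univ.erase v₀, geomRatio (lineBound K v) (lineLoad K R C v) (q v)) *
      tableCount (fun i j => (K i j : ℕ∞)) R C := by
  rw [tableCount_eq_card hC] at hT ⊢
  obtain ⟨a, ha⟩ := card_pos.mp hT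
  obtain ⟨ha, haS⟩ := mem_filter.mp ha
  have hload : fiberSum gridVertex (K.uncurry ∘ Prod.fst) = lineBound K :=
    fiberSum_gridVertex _
  rw [← hload]
  exact le_prod_geomRatio_mul_card gridVertex_surjective ha haS hq
    (fun z hz => capacity_mul_prod_le_marginSum hC hz) v₀

lemma lineLoad_le_lineBound (hC : ∀ j, C j ≤ ∑ i, K i j)
    (hT : 0 < tableCount (fun i j => (K i j : ℕ∞)) R C) (v : Fin m ⊕ Fin n) :
    lineLoad K R C v ≤ lineBound K v := by
  rw [tableCount_eq_card hC] at hT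
  obtain ⟨a, ha⟩ := card_pos.mp hT
  obtain ⟨ha, haS⟩ := mem_filter.mp ha
  rw [← haS]
  exact (fiberSum_le_of_mem_fiberTables ha v).trans_eq (congrFun (fiberSum_gridVertex _) v)

end Capacity

section Stirling

lemma two_pi_mul_le_exp_one_sq_mul {r : ℝ} (d : ℕ) (hr : 1 ≤ r) :
    2 * π * d ≤ exp 1 ^ 2 * (r * (1 + d)) := by
  have he : 2 * π ≤ exp 1 ^ 2 := by nlinarith [exp_one_gt_d9, pi_lt_d2]
  have hd : (d : ℝ) ≤ r * (1 + d) := by nlinarith [d.cast_nonneg (α := ℝ)]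
  gcongr

lemma four_mul_prod_le_sq {m n : ℕ} (a : Fin m ⊕ Fin n → ℕ) :
    4 * ∏ v, (1 + a v : ℝ) ≤
      ((∏ i, (1 + a (Sum.inl i)) + ∏ j, (1 + a (Sum.inr j)) : ℕ) : ℝ) ^ 2 := by
  rw [Fintype.prod_sum_type, ← mul_assoc]
  push_cast
  exact four_mul_le_sq_add _ _

lemma four_mul_prod_le_sq_mul {m n : ℕ} (a s : Fin m ⊕ Fin n → ℕ) :
    4 * ∏ v, exp 1 ^ 2 * (s v * (1 + a v : ℝ)) ≤
      (((∏ i, (1 + a (Sum.inl i)) + ∏ j, (1 + a (Sum.inr j)) : ℕ) : ℝ) *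
        ∏ v, exp 1 * √(s v)) ^ 2 := by
  have hsplit : ∏ v, exp 1 ^ 2 * (s v * (1 + a v : ℝ)) =
      (∏ v, (1 + a v : ℝ)) * (∏ v, exp 1 * √(s v)) ^ 2 := by
    rw [← prod_pow, ← prod_mul_distrib]
    refine prod_congr rfl fun v _ => ?_
    rw [mul_pow, sq_sqrt (Nat.cast_nonneg _)]
    ring
  rw [hsplit, ← mul_assoc, mul_pow]
  exact mul_le_mul_of_nonneg_right (four_mul_prod_le_sq a) (sq_nonneg _)

lemma log_sqrt_two_pi_mul_add {s : ℝ} (hs : 0 < s) :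
    log √(2 * π * s) + log (exp 1 / √(2 * π)) = log (exp 1 * √s) := by
  rw [sqrt_mul (by positivity), ← log_mul (by positivity) (by positivity)]
  congr 1
  field_simp

end Stirling

section Sandwich

variable {m n : ℕ} {K : Fin m → Fin n → ℕ} {R : Fin m → ℕ} {C : Fin n → ℕ}

lemma lineLoad_pos (hR : ∀ i, 0 < R i) (hC : ∀ j, C j < ∑ i, K i j) (v : Fin m ⊕ Fin n) :
    0 < lineLoad K R C v := by
  obtain i | j := v
  exacts [hR i, Nat.sub_pos_of_lt (hC j)]

lemma two_pi_mul_sum_le (hR : ∀ i, 0 < R i) :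
    2 * π * (∑ i, ∑ j, K i j : ℕ) ≤ ∑ v ∈ univ.map (.inl : Fin m ↪ Fin m ⊕ Fin n),
      exp 1 ^ 2 * (lineLoad K R C v * (1 + lineBound K v)) := by
  rw [sum_map, Nat.cast_sum, mul_sum]
  exact sum_le_sum fun i _ => two_pi_mul_le_exp_one_sq_mul _ (Nat.one_le_cast.mpr (hR i))

lemma exists_sqrt_two_pi_mul_prod_geomRatio_le [Nonempty (Fin m)] (hR : ∀ i, 0 < R i)
    (hC : ∀ j, C j < ∑ i, K i j) (hT : 0 < tableCount (fun i j => (K i j : ℕ∞)) R C) :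
    ∃ (q : Fin m ⊕ Fin n → ℝ) (v₀ : Fin m ⊕ Fin n), (∀ v, 0 < q v) ∧
      √(2 * π * (∑ i, ∑ j, K i j : ℕ)) *
          ∏ v ∈ univ.erase v₀, geomRatio (lineBound K v) (lineLoad K R C v) (q v) ≤
        ((∏ i, (1 + ∑ j, K i j) + ∏ j, (1 + ∑ i, K i j) : ℕ) : ℝ) *
          ∏ v, exp 1 * √(lineLoad K R C v) := by
  choose q hq hκ using fun v => exists_five_mul_geomRatio_sq_le (lineLoad_pos hR hC v)
    (lineLoad_le_lineBound (fun j => (hC j).le) hT v)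
  obtain ⟨v₀, hv₀⟩ := exists_sum_mul_prod_erase_sq_le (W := univ.map .inl) (by simp) hκ
  refine ⟨q, v₀, hq, le_of_sq_le_sq ?_ (by positivity)⟩
  rw [mul_pow, sq_sqrt (by positivity)]
  exact (mul_le_mul_of_nonneg_right (two_pi_mul_sum_le hR) (sq_nonneg _)).trans <|
    hv₀.trans (four_mul_prod_le_sq_mul (lineBound K) (lineLoad K R C))

lemma sqrt_two_pi_mul_capacity_le [Nonempty (Fin m)] [Nonempty (Fin n)] (hR : ∀ i, 0 < R i)
    (hC : ∀ j, C j < ∑ i, K i j) (hT : 0 < tableCount (fun i j => (K i j : ℕ∞)) R C) :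
    √(2 * π * (∑ i, ∑ j, K i j : ℕ)) * capacity K R C ≤
      ((∏ i, (1 + ∑ j, K i j) + ∏ j, (1 + ∑ i, K i j) : ℕ) : ℝ) *
        (∏ v, exp 1 * √(lineLoad K R C v)) * tableCount (fun i j => (K i j : ℕ∞)) R C := by
  obtain ⟨q, v₀, hq, hle⟩ := exists_sqrt_two_pi_mul_prod_geomRatio_le hR hC hT
  refine (mul_le_mul_of_nonneg_left (capacity_le_prod_geomRatio_mul_tableCount
    (fun j => (hC j).le) hT hq v₀) (sqrt_nonneg _)).trans ?_
  rw [← mul_assoc]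
  exact mul_le_mul_of_nonneg_right hle (Nat.cast_nonneg _)

lemma sum_log_sqrt_add_eq_log_prod (hR : ∀ i, 0 < R i) (hC : ∀ j, C j < ∑ i, K i j) :
    ∑ i, log √(2 * π * R i) + ∑ j, log √(2 * π * ((∑ i, K i j - C j : ℕ) : ℝ)) +
        ((m : ℝ) + n) * log (exp 1 / √(2 * π)) =
      log (∏ v, exp 1 * √(lineLoad K R C v)) := by
  have hS : ∀ v, (0 : ℝ) < lineLoad K R C v := fun v => Nat.cast_pos.mpr (lineLoad_pos hR hC v)
  rw [log_prod fun v _ => (mul_pos (exp_pos 1) (sqrt_pos.mpr (hS v))).ne',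
    ← sum_congr rfl fun v _ => log_sqrt_two_pi_mul_add (hS v), sum_add_distrib,
    Fintype.sum_sum_type]
  simp [lineLoad]

lemma sum_row_pos (hR : ∀ i, 0 < R i) (hC : ∀ j, C j ≤ ∑ i, K i j)
    (hT : 0 < tableCount (fun i j => (K i j : ℕ∞)) R C) (i : Fin m) : 0 < ∑ j, K i j :=
  (hR i).trans_le (lineLoad_le_lineBound hC hT (.inl i))

lemma log_capacity_sub_le [Nonempty (Fin m)] [Nonempty (Fin n)] (hR : ∀ i, 0 < R i)
    (hC : ∀ j, C j < ∑ i, K i j) (hT : 0 < tableCount (fun i j => (K i j : ℕ∞)) R C) :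
    log (capacity K R C) -
        log ((∏ i, (1 + ∑ j, K i j) + ∏ j, (1 + ∑ i, K i j) : ℕ) : ℝ) -
        (-log √(2 * π * (∑ i, ∑ j, K i j : ℕ)) + log (∏ v, exp 1 * √(lineLoad K R C v))) ≤
      log (tableCount (fun i j => (K i j : ℕ∞)) R C) := by
  have hprod : 0 < ∏ v, exp 1 * √(lineLoad K R C v) := prod_pos fun v _ =>
    mul_pos (exp_pos 1) (sqrt_pos.mpr (Nat.cast_pos.mpr (lineLoad_pos hR hC v)))
  have hT' : (0 : ℝ) < tableCount (fun i j => (K i j : ℕ∞)) R C := Nat.cast_pos.mpr hT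
  have hcap : 0 < capacity K R C := hT'.trans_le (tableCount_le_capacity fun j => (hC j).le)
  have hN : 0 < ∑ i, ∑ j, K i j :=
    sum_pos (fun i _ => sum_row_pos hR (fun j => (hC j).le) hT i) univ_nonempty
  have hsqrt : 0 < √(2 * π * (∑ i, ∑ j, K i j : ℕ)) := by positivity
  have h𝒩 : (0 : ℝ) < (∏ i, (1 + ∑ j, K i j) + ∏ j, (1 + ∑ i, K i j) : ℕ) := by positivity
  have hlog := log_le_log (mul_pos hsqrt hcap) (sqrt_two_pi_mul_capacity_le hR hC hT)
  rw [log_mul hsqrt.ne' hcap.ne', log_mul (mul_pos h𝒩 hprod).ne' hT'.ne',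
    log_mul h𝒩.ne' hprod.ne'] at hlog
  linarith

lemma log_capacity_sub_le_of_isEmpty [IsEmpty (Fin m)] [IsEmpty (Fin n)] :
    log (capacity K R C) -
        log ((∏ i, (1 + ∑ j, K i j) + ∏ j, (1 + ∑ i, K i j) : ℕ) : ℝ) -
        (-log √(2 * π * (∑ i, ∑ j, K i j : ℕ)) + log (∏ v, exp 1 * √(lineLoad K R C v))) ≤
      log (tableCount (fun i j => (K i j : ℕ∞)) R C) := by
  have hle : capacity K R C ≤ 1 := by
    simpa [genFun, monom] using capacity_le (K := K) (R := R) (C := C) (x := 1) (y := 1)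
      (fun _ => one_pos) fun _ => one_pos
  have hnonneg : 0 ≤ capacity K R C := (Nat.cast_nonneg _).trans
    (tableCount_le_capacity fun j => isEmptyElim j)
  have hcap := log_nonpos hnonneg hle
  have htwo : 0 ≤ log (2 : ℝ) := log_nonneg one_le_two
  have hT := log_natCast_nonneg (tableCount (fun i j => (K i j : ℕ∞)) R C)
  simp only [univ_eq_empty, sum_empty, add_zero, prod_const_one, Nat.reduceAdd, Nat.cast_ofNat,
    Nat.cast_zero, mul_zero, sqrt_zero, log_zero, neg_zero, prod_empty, log_one, sub_zero,
    tsub_le_iff_right]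
  linarith

end Sandwich

theorem logTable_genfun_sandwich_general {m n : ℕ} (K : Fin m → Fin n → ℕ)
    (R : Fin m → ℕ) (hR : ∀ i, 0 < R i) (C : Fin n → ℕ)
    (hCtilde : ∀ j, C j < ∑ i, K i j)
    (hT : 0 < tableCount (fun i j => (K i j : ℕ∞)) R C) :
    log (tableCount (fun i j => (K i j : ℕ∞)) R C) ≤ log (capacity K R C) ∧
    log (capacity K R C) -
        log (((∏ i, (1 + ∑ j, K i j)) + ∏ j, (1 + ∑ i, K i j) : ℕ)) -
        (-log √(2 * π * (∑ i, ∑ j, K i j)) + ∑ i, log √(2 * π * (R i)) +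
          ∑ j, log √(2 * π * (((∑ i, K i j) - C j : ℕ) : ℝ)) +
          ((m : ℝ) + (n : ℝ)) * log (exp 1 / √(2 * π))) ≤
      log (tableCount (fun i j => (K i j : ℕ∞)) R C) := by
  have hC := fun j => (hCtilde j).le
  refine ⟨log_le_log (Nat.cast_pos.mpr hT) (tableCount_le_capacity hC), ?_⟩
  rw [add_assoc (-_), add_assoc (-_), sum_log_sqrt_add_eq_log_prod hR hCtilde]
  obtain hm | hm := isEmpty_or_nonempty (Fin m)
  · have : IsEmpty (Fin n) := ⟨fun j => by simpa using hCtilde j⟩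
    exact log_capacity_sub_le_of_isEmpty
  · have : Nonempty (Fin n) := by
      obtain ⟨i⟩ := hm
      obtain ⟨j, -, -⟩ := exists_ne_zero_of_sum_ne_zero (sum_row_pos hR hC hT i).ne'
      exact ⟨j⟩
    exact log_capacity_sub_le hR hCtilde hT

end

/-- **Sandwich inequality from the proof of Theorem 2.** `ln T_K(R,C)` is within
`ln 𝒩 + ♥` of the log of the infimum of `G(x,y)/(x^R y^C)`. -/
theorem logTable_genfun_sandwich {m n : ℕ} (K : Fin m → Fin n → ℕ)
    (hK : ∀ i j, 0 < K i j)
    (R : Fin m → ℕ) (hR : ∀ i, 0 < R i) (C : Fin n → ℕ)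
    (hCtilde : ∀ j, C j < ∑ i, K i j)
    (hT : 0 < tableCount (fun i j => (K i j : ℕ∞)) R C) :
    Real.log (tableCount (fun i j => (K i j : ℕ∞)) R C) ≤
      Real.log (sInf {v : ℝ | ∃ (x : Fin m → ℝ) (y : Fin n → ℝ),
        (∀ i, 0 < x i) ∧ (∀ j, 0 < y j) ∧
        v = genFun K x y / (monom x R * monom y C)}) ∧
    Real.log (sInf {v : ℝ | ∃ (x : Fin m → ℝ) (y : Fin n → ℝ),
        (∀ i, 0 < x i) ∧ (∀ j, 0 < y j) ∧
        v = genFun K x y / (monom x R * monom y C)}) -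
      Real.log (((∏ i, (1 + ∑ j, K i j)) + ∏ j, (1 + ∑ i, K i j) : ℕ)) -
      (-Real.log (Real.sqrt (2 * Real.pi * (∑ i, ∑ j, K i j))) +
        ∑ i, Real.log (Real.sqrt (2 * Real.pi * (R i))) +
        ∑ j, Real.log (Real.sqrt (2 * Real.pi * (((∑ i, K i j) - C j : ℕ) : ℝ))) +
        ((m : ℝ) + (n : ℝ)) * Real.log (Real.exp 1 / Real.sqrt (2 * Real.pi))) ≤
      Real.log (tableCount (fun i j => (K i j : ℕ∞)) R C) :=
  logTable_genfun_sandwich_general K R hR C hCtilde hT
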